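/- Let 1 < α ≤ 2 and J(r) = r^{-α}. Let h:ℤ→ℝ_{≥0} be a field for which there exists η ∈ (0,1) such that ∑_{x∈Λ} h_x ≤ η · ∑_{x∈Λ} ∑_{y∈ℤ∖Λ} |x−y|^{−α} for every nonempty finite Λ ⊂ ℤ. Then for every ε ∈ (0,1) there exists β̄ > 0 such that for all β ≥ β̄ and all L ∈ ℕ one has ⟨σ₀⟩⁺_{J,h,β,L} ≥ 1 − ε and ⟨σ₀⟩⁻_{J,h,β,L} ≤ −(1 − ε); that is, such a small decaying field does not destroy the phase transition. -/

import Mathlib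

noncomputable section

/-! Configurations in `Ω_L^+` (equal to `+1` off `[-L,L]`) are encoded by the finite set
`A ⊆ [-L,L]` of their minus sites, and configurations in `Ω_L^-` by the finite set of
their plus sites. -/

/-- The spin configuration with plus boundary condition and minus sites `A`. -/
def spinP (A : Finset ℤ) (x : ℤ) : ℝ := if x ∈ A then -1 else 1

/-- The spin configuration with minus boundary condition and plus sites `A`. -/
def spinM (A : Finset ℤ) (x : ℤ) : ℝ := if x ∈ A then 1 else -1

/-- The Hamiltonian `H_J(σ) = ∑_{x<y} |x−y|^{-α} (1 − σ_x σ_y)`, as a `tsum` over pairs. -/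
def hamJ (α : ℝ) (σ : ℤ → ℝ) : ℝ :=
  ∑' p : ℤ × ℤ, if p.1 < p.2 then |(p.1 : ℝ) - (p.2 : ℝ)| ^ (-α) * (1 - σ p.1 * σ p.2) else 0

/-- The Hamiltonian with field, plus boundary condition:
`H⁺_{J,h}(σ) = H_J(σ) + ∑_x h_x (1 − σ_x)`. -/
def hamP (α : ℝ) (h : ℤ → ℝ) (σ : ℤ → ℝ) : ℝ := hamJ α σ + ∑' x : ℤ, h x * (1 - σ x)

/-- The Hamiltonian with field, minus boundary condition:
`H⁻_{J,h}(σ) = H_J(σ) − ∑_x h_x (1 + σ_x)`. -/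
def hamM (α : ℝ) (h : ℤ → ℝ) (σ : ℤ → ℝ) : ℝ := hamJ α σ - ∑' x : ℤ, h x * (1 + σ x)

/-- Subsets of the box `[-L, L]`. -/
def box (L : ℕ) : Finset (Finset ℤ) := (Finset.Icc (-(L : ℤ)) (L : ℤ)).powerset

/-- The finite-volume Gibbs expectation `⟨σ₀⟩⁺_{J,h,β,L}`. -/
def avgP (α : ℝ) (h : ℤ → ℝ) (β : ℝ) (L : ℕ) : ℝ :=
  (∑ A ∈ box L, spinP A 0 * Real.exp (-β * hamP α h (spinP A))) /
    ∑ A ∈ box L, Real.exp (-β * hamP α h (spinP A))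

/-- The finite-volume Gibbs expectation `⟨σ₀⟩⁻_{J,h,β,L}`. -/
def avgM (α : ℝ) (h : ℤ → ℝ) (β : ℝ) (L : ℕ) : ℝ :=
  (∑ A ∈ box L, spinM A 0 * Real.exp (-β * hamM α h (spinM A))) /
    ∑ A ∈ box L, Real.exp (-β * hamM α h (spinM A))

/-! ### Boundary points and the sets they enclose -/

/-- The number of points of `γ` at or to the left of `x`. -/
def countLE (γ : Finset ℤ) (x : ℤ) : ℕ := (γ.filter (· ≤ x)).card

/-- The sites separated from infinity by an odd number of the spin flips `γ`, where `p ∈ γ` stands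
for a flip between `p - 1` and `p`. -/
def encl (γ : Finset ℤ) : Finset ℤ :=
  ((γ ×ˢ γ).biUnion fun p => Finset.Ico p.1 p.2).filter fun x => Odd (countLE γ x)

lemma mem_encl {γ : Finset ℤ} (hγ : Even γ.card) (x : ℤ) :
    x ∈ encl γ ↔ Odd (countLE γ x) := by
  refine ⟨fun hx => (Finset.mem_filter.1 hx).2, fun hx => Finset.mem_filter.2 ⟨?_, hx⟩⟩
  obtain ⟨p, hp⟩ : (γ.filter (· ≤ x)).Nonempty := Finset.card_pos.1 hx.pos
  have hne : ∃ q ∈ γ, x < q := by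
    by_contra! hcon
    rw [countLE, Finset.filter_true_of_mem hcon] at hx
    exact (Nat.not_even_iff_odd.2 hx) hγ
  obtain ⟨q, hq, hxq⟩ := hne
  rw [Finset.mem_filter] at hp
  simp only [Finset.mem_biUnion, Finset.mem_product, Finset.mem_Ico]
  exact ⟨(p, q), ⟨hp.1, hq⟩, hp.2, hxq⟩

lemma exists_bounds_of_mem_encl {γ : Finset ℤ} {x : ℤ} (hx : x ∈ encl γ) :
    ∃ p ∈ γ, ∃ q ∈ γ, p ≤ x ∧ x < q := by
  have h1 := (Finset.mem_filter.1 hx).1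
  simp only [Finset.mem_biUnion, Finset.mem_product, Finset.mem_Ico] at h1
  obtain ⟨p, ⟨hp, hq⟩, h1, h2⟩ := h1
  exact ⟨p.1, hp, p.2, hq, h1, h2⟩

lemma countLE_eq_add (γ : Finset ℤ) {x y : ℤ} (hxy : x ≤ y) :
    countLE γ y = countLE γ x + (γ.filter fun q => x < q ∧ q ≤ y).card := by
  unfold countLE
  rw [← Finset.card_union_of_disjoint]
  · congr 1
    ext q
    simp only [Finset.mem_filter, Finset.mem_union]
    constructor
    · rintro ⟨h1, h2⟩
      rcases le_or_gt q x with h | h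
      · exact Or.inl ⟨h1, h⟩
      · exact Or.inr ⟨h1, h, h2⟩
    · rintro (⟨h1, h2⟩ | ⟨h1, h2, h3⟩)
      · exact ⟨h1, h2.trans hxy⟩
      · exact ⟨h1, h3⟩
  · rw [Finset.disjoint_left]
    intro q h1 h2
    have := (Finset.mem_filter.1 h1).2
    have := (Finset.mem_filter.1 h2).2.1
    omega

/-- Membership in `encl γ` changes between `x` and `y` exactly when an odd number of flips lies
between them. -/
lemma mem_encl_iff_iff {γ : Finset ℤ} (hγ : Even γ.card) {x y : ℤ} (hxy : x ≤ y) :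
    (x ∈ encl γ ↔ y ∈ encl γ) ↔ Even (γ.filter fun q => x < q ∧ q ≤ y).card := by
  rw [mem_encl hγ, mem_encl hγ, countLE_eq_add γ hxy]
  simp only [← Nat.not_even_iff_odd, Nat.even_add]
  tauto

/-- The spin flips of the configuration with minus set `A`. -/
def bdry (A : Finset ℤ) : Finset ℤ :=
  (A ∪ A.image (· + 1)).filter fun q => ¬ (q ∈ A ↔ q - 1 ∈ A)

lemma mem_bdry {A : Finset ℤ} {q : ℤ} : q ∈ bdry A ↔ ¬ (q ∈ A ↔ q - 1 ∈ A) := by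
  unfold bdry
  rw [Finset.mem_filter]
  refine ⟨fun h => h.2, fun h => ⟨?_, h⟩⟩
  rw [Finset.mem_union, Finset.mem_image]
  by_cases h1 : q ∈ A
  · exact Or.inl h1
  · exact Or.inr ⟨q - 1, by tauto, by ring⟩

lemma odd_countLE_bdry (A : Finset ℤ) (x : ℤ) : Odd (countLE (bdry A) x) ↔ x ∈ A := by
  obtain ⟨b, hb⟩ := (A ∪ bdry A).bddBelow
  have hbase : Odd (countLE (bdry A) (b - 1)) ↔ b - 1 ∈ A := by
    have h1 : b - 1 ∉ A := fun h => by
      have := hb (Finset.mem_coe.2 (Finset.mem_union_left _ h)); omega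
    have h2 : countLE (bdry A) (b - 1) = 0 := by
      rw [countLE, Finset.card_eq_zero, Finset.filter_eq_empty_iff]
      intro q hq hle
      have := hb (Finset.mem_coe.2 (Finset.mem_union_right _ hq)); omega
    simp [h1, h2]
  have hup : ∀ y, b - 1 ≤ y → (Odd (countLE (bdry A) y) ↔ y ∈ A) := by
    intro y hy
    induction y, hy using Int.leInduction with
    | base => exact hbase
    | succ n hn ih =>
      rw [countLE_eq_add (bdry A) (show n ≤ n + 1 by omega)]
      have hcard : ((bdry A).filter fun q => n < q ∧ q ≤ n + 1).card
          = if n + 1 ∈ bdry A then 1 else 0 := by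
        have : ((bdry A).filter fun q => n < q ∧ q ≤ n + 1)
            = (bdry A).filter fun q => q = n + 1 := by
          apply Finset.filter_congr; intro q _; omega
        rw [this, Finset.filter_eq']
        split_ifs <;> simp
      rw [hcard]
      have hm := @mem_bdry A (n + 1)
      rw [add_sub_cancel_right] at hm
      split_ifs with h
      · rw [hm] at h
        rw [Nat.odd_add_one, ih]; tauto
      · rw [hm] at h
        rw [add_zero, ih]; tauto
  rcases le_or_gt (b - 1) x with h | h
  · exact hup x h
  · have h1 : x ∉ A := fun h' => by
      have := hb (Finset.mem_coe.2 (Finset.mem_union_left _ h')); omega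
    have h2 : countLE (bdry A) x = 0 := by
      rw [countLE, Finset.card_eq_zero, Finset.filter_eq_empty_iff]
      intro q hq hle
      have := hb (Finset.mem_coe.2 (Finset.mem_union_right _ hq)); omega
    simp [h1, h2]

lemma even_card_bdry (A : Finset ℤ) : Even (bdry A).card := by
  obtain ⟨b, hb⟩ := (A ∪ bdry A).bddAbove
  have h1 : b + 1 ∉ A := fun h => by
    have := hb (Finset.mem_coe.2 (Finset.mem_union_left _ h)); omega
  rw [← odd_countLE_bdry, Nat.not_odd_iff_even, countLE, Finset.filter_true_of_mem] at h1
  · exact h1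
  · intro q hq
    have := hb (Finset.mem_coe.2 (Finset.mem_union_right _ hq)); omega

lemma encl_bdry (A : Finset ℤ) : encl (bdry A) = A := by
  ext x
  rw [mem_encl (even_card_bdry A), odd_countLE_bdry]

/-! ### Scales and irreducible families of flips -/

/-- The diameter of a finite set of integers. -/
def dia (γ : Finset ℤ) : ℕ := (γ ×ˢ γ).sup fun p => (p.1 - p.2).natAbs

lemma abs_sub_le_dia {γ : Finset ℤ} {p q : ℤ} (hp : p ∈ γ) (hq : q ∈ γ) :
    |p - q| ≤ (dia γ : ℤ) := by
  have : (p - q).natAbs ≤ dia γ :=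
    Finset.le_sup (f := fun p : ℤ × ℤ => (p.1 - p.2).natAbs) (b := (p, q))
      (Finset.mem_product.2 ⟨hp, hq⟩)
  rw [Int.abs_eq_natAbs]
  exact_mod_cast this

lemma dia_lt {γ : Finset ℤ} {n : ℕ} (hn : 0 < n) (h : ∀ p ∈ γ, ∀ q ∈ γ, |p - q| < (n : ℤ)) :
    dia γ < n := by
  unfold dia
  rw [Finset.sup_lt_iff (by simpa using hn)]
  intro p hp
  rw [Finset.mem_product] at hp
  have := h p.1 hp.1 p.2 hp.2
  rw [Int.abs_eq_natAbs] at this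
  exact_mod_cast this

lemma dia_mono {γ γ' : Finset ℤ} (h : γ ⊆ γ') : dia γ ≤ dia γ' :=
  Finset.sup_mono (Finset.product_subset_product h h)

/-- The dyadic scale of a finite set of integers. -/
def scl (γ : Finset ℤ) : ℕ := Nat.log 2 (dia γ)

lemma scl_mono {γ γ' : Finset ℤ} (h : γ ⊆ γ') : scl γ ≤ scl γ' :=
  Nat.log_mono_right (dia_mono h)

lemma abs_sub_lt_two_pow_scl {γ : Finset ℤ} {p q : ℤ} (hp : p ∈ γ) (hq : q ∈ γ) :
    |p - q| < 2 ^ (scl γ + 1) := by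
  have h1 := abs_sub_le_dia hp hq
  have h2 : dia γ < 2 ^ (scl γ + 1) := Nat.lt_pow_succ_log_self (by norm_num) _
  have h3 : (dia γ : ℤ) < 2 ^ (scl γ + 1) := by exact_mod_cast h2
  omega

/-- The exponent of the distance required around a family of scale `s`. -/
def gap (m s : ℕ) : ℕ := m + 3 + s + s / 2

lemma gap_mono (m : ℕ) {s t : ℕ} (h : s ≤ t) : gap m s ≤ gap m t := by
  unfold gap; omega

/-- Two families of flips are far apart relative to the smaller of their scales. -/
def FarApart (m : ℕ) (γ γ' : Finset ℤ) : Prop :=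
  ∀ p ∈ γ, ∀ q ∈ γ', (2 : ℤ) ^ gap m (min (scl γ) (scl γ')) ≤ |p - q|

lemma FarApart.symm {m : ℕ} {γ γ' : Finset ℤ} (h : FarApart m γ γ') : FarApart m γ' γ := by
  intro p hp q hq
  rw [min_comm, abs_sub_comm]
  exact h q hq p hp

lemma FarApart.mono {m : ℕ} {γ γ' δ δ' : Finset ℤ} (h : FarApart m γ γ')
    (h1 : δ ⊆ γ) (h2 : δ' ⊆ γ') : FarApart m δ δ' := fun p hp q hq =>
  (pow_le_pow_right₀ (by norm_num)
    (gap_mono m (min_le_min (scl_mono h1) (scl_mono h2)))).trans (h p (h1 hp) q (h2 hq))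

lemma FarApart.disjoint {m : ℕ} {γ γ' : Finset ℤ} (h : FarApart m γ γ') : Disjoint γ γ' := by
  rw [Finset.disjoint_left]
  intro p hp hp'
  have h1 := h p hp p hp'
  have : (0 : ℤ) < 2 ^ gap m (min (scl γ) (scl γ')) := by positivity
  simp at h1
  omega

/-- A family of flips that cannot be split into two even families far from each other. -/
def Irr (m : ℕ) (γ : Finset ℤ) : Prop :=
  ∀ δ ⊆ γ, δ.Nonempty → δ ≠ γ → Even δ.card → ¬ FarApart m δ (γ \ δ)

/-- Every even family of flips decomposes into irreducible even families far from each other. -/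
lemma exists_decomposition (m : ℕ) (γ : Finset ℤ) (hγ : Even γ.card) :
    ∃ 𝒞 : Finset (Finset ℤ), 𝒞.biUnion id = γ ∧
      (∀ δ ∈ 𝒞, δ.Nonempty ∧ Even δ.card ∧ Irr m δ) ∧
      ∀ δ ∈ 𝒞, ∀ δ' ∈ 𝒞, δ ≠ δ' → FarApart m δ δ' := by
  induction γ using Finset.strongInduction with
  | H γ ih =>
    rcases γ.eq_empty_or_nonempty with rfl | hne
    · exact ⟨∅, by simp⟩
    by_cases hirr : Irr m γ
    · refine ⟨{γ}, by simp, by simpa using ⟨hne, hγ, hirr⟩, ?_⟩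
      intro δ hδ δ' hδ' h
      rw [Finset.mem_singleton] at hδ hδ'
      exact absurd (hδ.trans hδ'.symm) h
    unfold Irr at hirr
    push Not at hirr
    obtain ⟨δ, hsub, hδne, hδ, heven, hsep⟩ := hirr
    have heven' : Even (γ \ δ).card := by
      have := Finset.card_sdiff_add_card_eq_card hsub
      rw [← this, Nat.even_add] at hγ
      tauto
    have hss : γ \ δ ⊂ γ := Finset.sdiff_ssubset hsub hδne
    obtain ⟨𝒞, h1, h2, h3⟩ := ih δ (Finset.ssubset_iff_subset_ne.2 ⟨hsub, hδ⟩) heven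
    obtain ⟨𝒬, k1, k2, k3⟩ := ih (γ \ δ) hss heven'
    have hP : ∀ ζ ∈ 𝒞, ζ ⊆ δ := fun ζ hζ => h1 ▸ Finset.subset_biUnion_of_mem id hζ
    have hQ : ∀ ζ ∈ 𝒬, ζ ⊆ γ \ δ := fun ζ hζ => k1 ▸ Finset.subset_biUnion_of_mem id hζ
    refine ⟨𝒞 ∪ 𝒬, ?_, ?_, ?_⟩
    · rw [Finset.union_biUnion, h1, k1, Finset.union_sdiff_of_subset hsub]
    · intro ζ hζ
      rcases Finset.mem_union.1 hζ with h | h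
      · exact h2 ζ h
      · exact k2 ζ h
    · intro ζ hζ ζ' hζ' hn
      rcases Finset.mem_union.1 hζ with h | h <;> rcases Finset.mem_union.1 hζ' with h' | h'
      · exact h3 ζ h ζ' h' hn
      · exact hsep.mono (hP ζ h) (hQ ζ' h')
      · exact (hsep.mono (hP ζ' h') (hQ ζ h)).symm
      · exact k3 ζ h ζ' h' hn

lemma card_filter_biUnion {m : ℕ} {𝒞 : Finset (Finset ℤ)}
    (hsep : ∀ δ ∈ 𝒞, ∀ δ' ∈ 𝒞, δ ≠ δ' → FarApart m δ δ') (r : ℤ → Prop) [DecidablePred r] :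
    ((𝒞.biUnion id).filter r).card = ∑ δ ∈ 𝒞, (δ.filter r).card := by
  rw [Finset.filter_biUnion, Finset.card_biUnion]
  · rfl
  · intro δ hδ δ' hδ' hn
    exact Finset.disjoint_filter_filter (hsep δ hδ δ' hδ' hn).disjoint

/-! ### The interaction and the cut energy -/

/-- The interaction `|z|^{-α}`. -/
def kern (α : ℝ) (z : ℤ) : ℝ := |(z : ℝ)| ^ (-α)

lemma kern_nonneg (α : ℝ) (z : ℤ) : 0 ≤ kern α z := Real.rpow_nonneg (abs_nonneg _) _

lemma kern_neg (α : ℝ) (z : ℤ) : kern α (-z) = kern α z := by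
  unfold kern; rw [Int.cast_neg, abs_neg]

lemma kern_sub_comm (α : ℝ) (x y : ℤ) : kern α (x - y) = kern α (y - x) := by
  rw [← kern_neg, neg_sub]

lemma kern_anti {α : ℝ} (hα : 1 < α) {z w : ℤ} (hz : z ≠ 0) (h : |z| ≤ |w|) :
    kern α w ≤ kern α z := by
  unfold kern
  apply Real.rpow_le_rpow_of_nonpos
  · exact abs_pos.2 (by exact_mod_cast hz)
  · exact_mod_cast h
  · linarith

lemma le_kern {α : ℝ} (hα1 : 1 < α) (hα2 : α ≤ 2) {z : ℤ} (hz : z ≠ 0) {n : ℕ}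
    (h : |z| ≤ 2 ^ n) : (1 / 4 : ℝ) ^ n ≤ kern α z := by
  have h1 : kern α (2 ^ n) ≤ kern α z := kern_anti hα1 hz (by
    rwa [abs_of_nonneg (a := (2 : ℤ) ^ n) (by positivity)])
  refine le_trans ?_ h1
  unfold kern
  rw [abs_of_pos (by positivity)]
  push_cast
  have h2 : (1 / 4 : ℝ) ^ n = ((2 : ℝ) ^ n) ^ (-2 : ℝ) := by
    rw [Real.rpow_neg (by positivity), one_div, inv_pow]
    congr 1
    rw [show (2 : ℝ) = ((2 : ℕ) : ℝ) by norm_num, Real.rpow_natCast]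
    push_cast
    rw [← pow_mul, mul_comm, pow_mul]; norm_num
  rw [h2]
  apply Real.rpow_le_rpow_of_exponent_le
  · exact one_le_pow₀ (by norm_num)
  · linarith

lemma summable_kern {α : ℝ} (hα : 1 < α) : Summable (kern α) := by
  have := Real.summable_abs_int_rpow hα
  exact this

lemma summable_kern_sub {α : ℝ} (hα : 1 < α) (x : ℤ) : Summable fun y => kern α (x - y) :=
  (summable_kern hα).comp_injective (Equiv.subLeft x).injective

open Classical in
/-- The number `a` if `P` holds, and `0` otherwise. -/
def pick (P : Prop) (a : ℝ) : ℝ := if P then a else 0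

lemma pick_pos {P : Prop} (h : P) (a : ℝ) : pick P a = a := if_pos h

lemma pick_neg {P : Prop} (h : ¬ P) (a : ℝ) : pick P a = 0 := if_neg h

lemma pick_nonneg (P : Prop) {a : ℝ} (ha : 0 ≤ a) : 0 ≤ pick P a := by
  unfold pick; split_ifs <;> simp [ha]

lemma pick_le (P : Prop) {a : ℝ} (ha : 0 ≤ a) : pick P a ≤ a := by
  unfold pick; split_ifs <;> simp [ha]

lemma pick_mono {P Q : Prop} (h : P → Q) {a : ℝ} (ha : 0 ≤ a) : pick P a ≤ pick Q a := by
  by_cases hP : P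
  · rw [pick_pos hP, pick_pos (h hP)]
  · rw [pick_neg hP]; exact pick_nonneg Q ha

lemma summable_pick_kern {α : ℝ} (hα : 1 < α) (x : ℤ) (P : ℤ → Prop) :
    Summable fun y => pick (P y) (kern α (x - y)) :=
  Summable.of_nonneg_of_le (fun _ => pick_nonneg _ (kern_nonneg _ _))
    (fun _ => pick_le _ (kern_nonneg _ _)) (summable_kern_sub hα x)

lemma summable_pair_kern {α : ℝ} (hα : 1 < α) (T : Finset ℤ) (P : ℤ → ℤ → Prop) :
    Summable fun p : ℤ × ℤ => pick (p.1 ∈ T ∧ P p.1 p.2) (kern α (p.1 - p.2)) := by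
  rw [summable_prod_of_nonneg]
  · refine ⟨fun x => summable_pick_kern hα x fun y => x ∈ T ∧ P x y, ?_⟩
    refine summable_of_ne_finset_zero (s := T) fun x hx => ?_
    simp [pick, hx]
  · exact fun p => pick_nonneg _ (kern_nonneg _ _)

/-- The interaction energy between `B` and its complement, restricted to related pairs. -/
def partialCut (α : ℝ) (B : Finset ℤ) (R : ℤ → ℤ → Prop) : ℝ :=
  ∑ x ∈ B, ∑' y : ℤ, pick (y ∉ B ∧ R x y) (kern α (x - y))

/-- The interaction energy between `B` and its complement. -/
def cut (α : ℝ) (B : Finset ℤ) : ℝ := partialCut α B fun _ _ => True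

lemma cut_eq (α : ℝ) (B : Finset ℤ) :
    cut α B = ∑ x ∈ B, ∑' y : ℤ, if y ∈ B then 0 else |(x : ℝ) - (y : ℝ)| ^ (-α) := by
  unfold cut partialCut kern
  refine Finset.sum_congr rfl fun x _ => tsum_congr fun y => ?_
  by_cases h : y ∈ B <;> simp [pick, h]

lemma partialCut_eq_tsum {α : ℝ} (hα : 1 < α) (B : Finset ℤ) (R : ℤ → ℤ → Prop) :
    partialCut α B R =
      ∑' p : ℤ × ℤ, pick (p.1 ∈ B ∧ (p.2 ∉ B ∧ R p.1 p.2)) (kern α (p.1 - p.2)) := by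
  rw [(summable_pair_kern hα B fun x y => y ∉ B ∧ R x y).tsum_prod, tsum_eq_sum (s := B)]
  · unfold partialCut
    refine Finset.sum_congr rfl fun x hx => tsum_congr fun y => ?_
    simp [hx]
  · intro x hx
    simp [hx, pick]

lemma hasSum_differ {α : ℝ} (hα : 1 < α) (B : Finset ℤ) (R : ℤ → ℤ → Prop)
    (hR : ∀ x y, R x y ↔ R y x) :
    HasSum (fun p : ℤ × ℤ => pick (¬ (p.1 ∈ B ↔ p.2 ∈ B) ∧ R p.1 p.2) (kern α (p.1 - p.2)))
      (2 * partialCut α B R) := by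
  have h1 := (summable_pair_kern hα B fun x y => y ∉ B ∧ R x y).hasSum
  rw [← partialCut_eq_tsum hα] at h1
  have h2 := (Equiv.prodComm ℤ ℤ).hasSum_iff.2 h1
  rw [two_mul]
  convert h1.add h2 using 1
  funext p
  obtain ⟨x, y⟩ := p
  simp only [Function.comp_apply, Equiv.prodComm_apply, Prod.swap_prod_mk]
  rw [kern_sub_comm α y x]
  have := hR x y
  by_cases hx : x ∈ B <;> by_cases hy : y ∈ B <;> by_cases hr : R x y <;> simp_all [pick]

lemma hamJ_eq_of_differ {α : ℝ} (hα : 1 < α) (σ : ℤ → ℝ) (A : Finset ℤ)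
    (hσ : ∀ x y, 1 - σ x * σ y = pick (¬ (x ∈ A ↔ y ∈ A)) 2) :
    hamJ α σ = 2 * cut α A := by
  have h0 := hasSum_differ hα A (fun _ _ => True) (fun _ _ => Iff.rfl)
  set f : ℤ × ℤ → ℝ := fun p => if p.1 < p.2 then
    |(p.1 : ℝ) - (p.2 : ℝ)| ^ (-α) * (1 - σ p.1 * σ p.2) else 0 with hf
  have hfk : ∀ p, f p = if p.1 < p.2 then
      2 * pick (¬ (p.1 ∈ A ↔ p.2 ∈ A) ∧ True) (kern α (p.1 - p.2)) else 0 := by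
    intro p
    simp only [hf, hσ, kern]
    by_cases h : p.1 < p.2
    · rw [if_pos h, if_pos h]
      by_cases h' : p.1 ∈ A ↔ p.2 ∈ A
      · simp [pick, h']
      · rw [pick_pos h', pick_pos ⟨h', trivial⟩]; push_cast; ring
    · rw [if_neg h, if_neg h]
  have hfs : Summable f := by
    refine Summable.of_nonneg_of_le (fun p => ?_) (fun p => ?_) (h0.summable.mul_left 2)
    · rw [hfk]; split_ifs
      · exact mul_nonneg zero_le_two (pick_nonneg _ (kern_nonneg _ _))
      · exact le_rfl
    · rw [hfk]; split_ifs
      · exact le_rfl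
      · exact mul_nonneg zero_le_two (pick_nonneg _ (kern_nonneg _ _))
  have h1 : HasSum f (hamJ α σ) := hfs.hasSum
  have h2 := (Equiv.prodComm ℤ ℤ).hasSum_iff.2 h1
  have key : (fun p => f p + (f ∘ (Equiv.prodComm ℤ ℤ)) p) =
      fun p => 2 * pick (¬ (p.1 ∈ A ↔ p.2 ∈ A) ∧ True) (kern α (p.1 - p.2)) := by
    funext p
    obtain ⟨x, y⟩ := p
    simp only [Function.comp_apply, Equiv.prodComm_apply, Prod.swap_prod_mk, hfk]
    rcases lt_trichotomy x y with h | h | h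
    · simp [h, h.not_gt]
    · subst h; simp [pick]
    · rw [kern_sub_comm α x y]
      have : (x ∈ A ↔ y ∈ A) ↔ (y ∈ A ↔ x ∈ A) := Iff.comm
      simp [h, h.not_gt, this]
  have h3 := h1.add h2
  rw [key] at h3
  have h4 := h3.unique (h0.mul_left 2)
  unfold cut
  linarith

lemma hamJ_spinP {α : ℝ} (hα : 1 < α) (A : Finset ℤ) : hamJ α (spinP A) = 2 * cut α A := by
  refine hamJ_eq_of_differ hα _ A fun x y => ?_
  by_cases hx : x ∈ A <;> by_cases hy : y ∈ A <;> norm_num [pick, spinP, hx, hy]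

lemma hamJ_spinM {α : ℝ} (hα : 1 < α) (A : Finset ℤ) : hamJ α (spinM A) = 2 * cut α A := by
  refine hamJ_eq_of_differ hα _ A fun x y => ?_
  by_cases hx : x ∈ A <;> by_cases hy : y ∈ A <;> norm_num [pick, spinM, hx, hy]

lemma hamP_spinP {α : ℝ} (hα : 1 < α) (h : ℤ → ℝ) (A : Finset ℤ) :
    hamP α h (spinP A) = 2 * (cut α A + ∑ x ∈ A, h x) := by
  unfold hamP
  rw [hamJ_spinP hα, tsum_eq_sum (s := A), mul_add, Finset.mul_sum]
  · congr 1
    refine Finset.sum_congr rfl fun x hx => ?_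
    simp only [spinP, if_pos hx]; ring
  · intro x hx
    simp [spinP, hx]

lemma hamM_spinM {α : ℝ} (hα : 1 < α) (h : ℤ → ℝ) (A : Finset ℤ) :
    hamM α h (spinM A) = 2 * (cut α A + ∑ x ∈ A, -h x) := by
  unfold hamM
  rw [hamJ_spinM hα, tsum_eq_sum (s := A), mul_add, Finset.sum_neg_distrib, mul_neg,
    ← sub_eq_add_neg, Finset.mul_sum]
  · congr 1
    refine Finset.sum_congr rfl fun x hx => ?_
    simp only [spinM, if_pos hx]; ring
  · intro x hx
    simp [spinM, hx]

/-- Flipping the spins in `B` gains the energy of `B` up to twice the contribution of the pairs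
across the boundary of `B` on which the spins of `A` agree. -/
lemma cut_add_partialCut {α : ℝ} (hα : 1 < α) (A B : Finset ℤ) :
    cut α A + 2 * partialCut α B (fun x y => x ∈ A ↔ y ∈ A)
      = cut α (symmDiff A B) + cut α B := by
  have h1 := hasSum_differ hα A (fun _ _ => True) (fun _ _ => Iff.rfl)
  have h2 := hasSum_differ hα B (fun _ _ => True) (fun _ _ => Iff.rfl)
  have h3 := hasSum_differ hα (symmDiff A B) (fun _ _ => True) (fun _ _ => Iff.rfl)
  have h4 := hasSum_differ hα B (fun x y => x ∈ A ↔ y ∈ A) (fun _ _ => Iff.comm)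
  have h5 := (h1.add (h4.mul_left 2)).unique (a₂ := 2 * cut α (symmDiff A B) + 2 * cut α B) (by
    convert h3.add h2 using 1
    · funext p
      obtain ⟨x, y⟩ := p
      simp only [Finset.mem_symmDiff]
      by_cases ha : x ∈ A <;> by_cases hb : x ∈ B <;> by_cases ha' : y ∈ A <;>
        by_cases hb' : y ∈ B <;> simp [ha, hb, ha', hb', pick] <;> ring
    · rfl)
  unfold cut at *
  linarith

/-- Any finite collection of pairs separated by `B` bounds the energy of `B` from below. -/
lemma sum_kern_le_cut {α : ℝ} (hα : 1 < α) (B : Finset ℤ) (T : Finset (ℤ × ℤ))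
    (hT : ∀ p ∈ T, ¬ (p.1 ∈ B ↔ p.2 ∈ B)) :
    ∑ p ∈ T, kern α (p.1 - p.2) ≤ 2 * cut α B := by
  have h0 := hasSum_differ hα B (fun _ _ => True) (fun _ _ => Iff.rfl)
  refine le_trans (le_of_eq ?_) (sum_le_hasSum T (fun p _ => pick_nonneg _ (kern_nonneg _ _)) h0)
  refine Finset.sum_congr rfl fun p hp => ?_
  rw [pick_pos ⟨hT p hp, trivial⟩]

/-! ### Packing numbers and the energy of irreducible families -/

/-- Points at mutual distances at least `2 ^ k`. -/
def Spread (k : ℕ) (P : Finset ℤ) : Prop := ∀ p ∈ P, ∀ q ∈ P, p ≠ q → (2 : ℤ) ^ k ≤ |p - q|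

open Classical in
/-- The largest number of points of `γ` at mutual distances at least `2 ^ k`. -/
def packing (γ : Finset ℤ) (k : ℕ) : ℕ := (γ.powerset.filter (Spread k)).sup Finset.card

lemma card_le_packing {γ P : Finset ℤ} {k : ℕ} (h : P ⊆ γ) (hP : Spread k P) :
    P.card ≤ packing γ k := by
  classical
  exact Finset.le_sup (f := Finset.card) (Finset.mem_filter.2 ⟨Finset.mem_powerset.2 h, hP⟩)

lemma exists_packing (γ : Finset ℤ) (k : ℕ) :
    ∃ P ⊆ γ, Spread k P ∧ P.card = packing γ k := by
  classical
  have hne : (γ.powerset.filter (Spread k)).Nonempty :=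
    ⟨∅, Finset.mem_filter.2 ⟨Finset.empty_mem_powerset _, by simp [Spread]⟩⟩
  obtain ⟨P, hP, h⟩ := Finset.exists_mem_eq_sup _ hne Finset.card
  rw [Finset.mem_filter, Finset.mem_powerset] at hP
  exact ⟨P, hP.1, hP.2, h.symm⟩

lemma packing_antitone (γ : Finset ℤ) : Antitone (packing γ) := by
  intro k l hkl
  obtain ⟨P, h1, h2, h3⟩ := exists_packing γ l
  rw [← h3]
  exact card_le_packing h1 fun p hp q hq hn =>
    (pow_le_pow_right₀ (by norm_num) hkl).trans (h2 p hp q hq hn)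

lemma packing_le_card (γ : Finset ℤ) (k : ℕ) : packing γ k ≤ γ.card := by
  obtain ⟨P, h1, -, h3⟩ := exists_packing γ k
  rw [← h3]
  exact Finset.card_le_card h1

/-- The number of dyadic cells of side `2 ^ k` that meet `γ`. -/
def cells (k : ℕ) (γ : Finset ℤ) : ℕ := (γ.image (· / 2 ^ k)).card

lemma card_cells_filter_le_packing (γ S : Finset ℤ) (k : ℕ) (hS : S ⊆ γ.image (· / 2 ^ k))
    (hsep : ∀ a ∈ S, ∀ b ∈ S, a ≠ b → 2 ≤ |a - b|) : S.card ≤ packing γ k := by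
  have hex : ∀ a ∈ S, ∃ p ∈ γ, p / 2 ^ k = a := fun a ha => Finset.mem_image.1 (hS ha)
  choose! f hf1 hf2 using hex
  have hinj : Set.InjOn f S := fun a ha b hb hab => by
    rw [← hf2 a ha, ← hf2 b hb, hab]
  rw [← Finset.card_image_of_injOn hinj]
  apply card_le_packing
  · intro p hp
    obtain ⟨a, ha, rfl⟩ := Finset.mem_image.1 hp
    exact hf1 a ha
  · intro p hp q hq hn
    obtain ⟨a, ha, rfl⟩ := Finset.mem_image.1 hp
    obtain ⟨b, hb, rfl⟩ := Finset.mem_image.1 hq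
    have hab := hsep a ha b hb fun h => hn (by rw [h])
    have hpos : (0 : ℤ) < 2 ^ k := by positivity
    have h1 := Int.emod_nonneg (f a) hpos.ne'
    have h2 := Int.emod_lt_of_pos (f a) hpos
    have h3 := Int.mul_ediv_add_emod (f a) (2 ^ k)
    have h4 := Int.emod_nonneg (f b) hpos.ne'
    have h5 := Int.emod_lt_of_pos (f b) hpos
    have h6 := Int.mul_ediv_add_emod (f b) (2 ^ k)
    rw [hf2 a ha] at h3
    rw [hf2 b hb] at h6
    rw [le_abs] at hab ⊢
    rcases hab with hab | hab
    · left; nlinarith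
    · right; nlinarith

lemma cells_le_packing (k : ℕ) (γ : Finset ℤ) : cells k γ ≤ 2 * packing γ k := by
  unfold cells
  rw [← Finset.card_filter_add_card_filter_not (s := γ.image (· / 2 ^ k)) (fun a => Even a), two_mul]
  refine add_le_add ?_ ?_
  · refine card_cells_filter_le_packing γ _ k (Finset.filter_subset _ _) fun a ha b hb hn => ?_
    obtain ⟨i, hi⟩ := (Finset.mem_filter.1 ha).2
    obtain ⟨j, hj⟩ := (Finset.mem_filter.1 hb).2
    rw [le_abs]; omega
  · refine card_cells_filter_le_packing γ _ k (Finset.filter_subset _ _) fun a ha b hb hn => ?_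
    obtain ⟨i, hi⟩ := Int.not_even_iff_odd.1 (Finset.mem_filter.1 ha).2
    obtain ⟨j, hj⟩ := Int.not_even_iff_odd.1 (Finset.mem_filter.1 hb).2
    rw [le_abs]; omega

/-- No point of `γ` lies at an intermediate distance from `p`. -/
def Isolated (m : ℕ) (γ : Finset ℤ) (k : ℕ) (p : ℤ) : Prop :=
  ∀ q ∈ γ, (2 : ℤ) ^ k ≤ |p - q| → (2 : ℤ) ^ (gap m k + 1) ≤ |p - q|

/-- In a spread-out set, every point that is not isolated accounts for a second point at a smaller
scale. -/
lemma exists_isolated (m : ℕ) (γ : Finset ℤ) (k : ℕ) :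
    ∃ O ⊆ γ, Spread (gap m k + 3) O ∧ (∀ p ∈ O, Isolated m γ k p) ∧
      2 * packing γ (gap m k + 3) ≤ packing γ k + O.card := by
  classical
  obtain ⟨P, hsub, hsp, hcard⟩ := exists_packing γ (gap m k + 3)
  refine ⟨P.filter (Isolated m γ k), (Finset.filter_subset _ _).trans hsub, ?_, ?_, ?_⟩
  · intro p hp q hq
    exact hsp p (Finset.mem_filter.1 hp).1 q (Finset.mem_filter.1 hq).1
  · exact fun p hp => (Finset.mem_filter.1 hp).2
  set Q := P.filter fun p => ¬ Isolated m γ k p with hQ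
  have hPQ : (P.filter (Isolated m γ k)).card + Q.card = P.card :=
    Finset.card_filter_add_card_filter_not _
  have hex : ∀ p ∈ Q, ∃ q ∈ γ, (2 : ℤ) ^ k ≤ |p - q| ∧ |p - q| < (2 : ℤ) ^ (gap m k + 1) := by
    intro p hp
    have := (Finset.mem_filter.1 hp).2
    unfold Isolated at this
    push Not at this
    exact this
  choose! f hf1 hf2 hf3 using hex
  have hQP : ∀ p ∈ Q, p ∈ P := fun p hp => (Finset.mem_filter.1 hp).1
  have hk : (2 : ℤ) ^ k ≤ 2 ^ (gap m k + 1) :=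
    pow_le_pow_right₀ (by norm_num) (by unfold gap; omega)
  have hg : (2 : ℤ) ^ (gap m k + 3) = 4 * 2 ^ (gap m k + 1) := by ring
  have hpos : (0 : ℤ) < 2 ^ (gap m k + 1) := by positivity
  have hfar : ∀ p ∈ P, ∀ q ∈ P, p ≠ q → 4 * 2 ^ (gap m k + 1) ≤ |p - q| := fun p hp q hq hn =>
    hg ▸ hsp p hp q hq hn
  have hkpos : (0 : ℤ) < 2 ^ k := by positivity
  have hPf : ∀ p ∈ P, ∀ q ∈ Q, (2 : ℤ) ^ k ≤ |p - f q| := by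
    intro p hp q hq
    by_cases h : p = q
    · subst h; exact hf2 p hq
    · have h1 := hfar p hp q (hQP q hq) h
      have h2 := hf3 q hq
      have h3 := abs_sub_le p (f q) q
      rw [abs_sub_comm (f q) q] at h3
      linarith
  have hff : ∀ p ∈ Q, ∀ q ∈ Q, p ≠ q → (2 : ℤ) ^ k ≤ |f p - f q| := by
    intro p hp q hq h
    have h1 := hfar p (hQP p hp) q (hQP q hq) h
    have h2 := hf3 q hq
    have h4 := hf3 p hp
    have h3 := abs_sub_le p (f p) q
    have h5 := abs_sub_le (f p) (f q) q
    rw [abs_sub_comm (f q) q] at h5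
    linarith
  have hinj : Set.InjOn f Q := fun p hp q hq h => by
    by_contra hn
    have := hff p hp q hq hn
    rw [h, sub_self, abs_zero] at this
    linarith
  have hdisj : Disjoint P (Q.image f) := by
    rw [Finset.disjoint_left]
    intro p hp hp'
    obtain ⟨q, hq, rfl⟩ := Finset.mem_image.1 hp'
    have := hPf _ hp q hq
    rw [sub_self, abs_zero] at this
    linarith
  have hfin : (P ∪ Q.image f).card ≤ packing γ k := by
    apply card_le_packing
    · intro x hx
      rcases Finset.mem_union.1 hx with h | h
      · exact hsub h
      · obtain ⟨q, hq, rfl⟩ := Finset.mem_image.1 h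
        exact hf1 q hq
    · intro x hx y hy hn
      rcases Finset.mem_union.1 hx with h | h <;> rcases Finset.mem_union.1 hy with h' | h'
      · have := hfar x h y h' hn
        linarith
      · obtain ⟨q, hq, rfl⟩ := Finset.mem_image.1 h'
        exact hPf x h q hq
      · obtain ⟨q, hq, rfl⟩ := Finset.mem_image.1 h
        rw [abs_sub_comm]
        exact hPf y h' q hq
      · obtain ⟨p, hp, rfl⟩ := Finset.mem_image.1 h
        obtain ⟨q, hq, rfl⟩ := Finset.mem_image.1 h'
        exact hff p hp q hq fun h => hn (by rw [h])
  rw [Finset.card_union_of_disjoint hdisj, Finset.card_image_of_injOn hinj] at hfin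
  omega

/-- The flips near an isolated point of an irreducible family are odd in number. -/
lemma Isolated.odd_card {m : ℕ} {γ : Finset ℤ} (hirr : Irr m γ) {k : ℕ}
    (hk : 2 ^ (k + 1) ≤ dia γ) {p : ℤ} (hp : p ∈ γ) (hiso : Isolated m γ k p) :
    Odd (γ.filter fun q => |p - q| < 2 ^ k).card := by
  by_contra hcon
  rw [Nat.not_odd_iff_even] at hcon
  set δ := γ.filter fun q => |p - q| < 2 ^ k with hδ
  have hdia : dia δ < 2 ^ (k + 1) := by
    refine dia_lt (by positivity) fun a ha b hb => ?_
    have h1 := (Finset.mem_filter.1 ha).2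
    have h2 := (Finset.mem_filter.1 hb).2
    have h3 := abs_sub_le a p b
    rw [abs_sub_comm a p] at h3
    push_cast
    rw [pow_succ]
    linarith
  refine hirr δ (Finset.filter_subset _ _) ⟨p, Finset.mem_filter.2 ⟨hp, by simp⟩⟩ ?_ hcon ?_
  · intro h
    rw [h] at hdia
    omega
  · intro a ha b hb
    have hs : scl δ ≤ k := Nat.lt_succ_iff.1 (Nat.log_lt_of_lt_pow' (by omega) hdia)
    have h1 := (Finset.mem_filter.1 ha).2
    rw [Finset.mem_sdiff] at hb
    have h2 : (2 : ℤ) ^ k ≤ |p - b| := by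
      by_contra h
      exact hb.2 (Finset.mem_filter.2 ⟨hb.1, not_le.1 h⟩)
    have h3 := hiso b hb.1 h2
    have h4 := abs_sub_le p a b
    have h5 : (2 : ℤ) ^ gap m (min (scl δ) (scl (γ \ δ))) ≤ 2 ^ gap m k :=
      pow_le_pow_right₀ (by norm_num) (gap_mono m ((min_le_left _ _).trans hs))
    have h6 : (2 : ℤ) ^ k ≤ 2 ^ gap m k := pow_le_pow_right₀ (by norm_num) (by unfold gap; omega)
    rw [pow_succ] at h3
    linarith

/-- Pairs of sites on opposite sides of `p`, at distances from `p` comparable to `2 ^ k`. -/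
def sidePairs (k : ℕ) (p : ℤ) : Finset (ℤ × ℤ) :=
  Finset.Ioc (p - 2 ^ (k + 1)) (p - 2 ^ k) ×ˢ Finset.Ico (p + 2 ^ k) (p + 2 ^ (k + 1))

lemma card_sidePairs (k : ℕ) (p : ℤ) : (sidePairs k p).card = 4 ^ k := by
  unfold sidePairs
  rw [Finset.card_product, Int.card_Ioc, Int.card_Ico]
  have h1 : p - 2 ^ k - (p - 2 ^ (k + 1)) = 2 ^ k := by ring
  have h2 : p + 2 ^ (k + 1) - (p + 2 ^ k) = 2 ^ k := by ring
  rw [h1, h2]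
  have h3 : ((2 : ℤ) ^ k).toNat = 2 ^ k := by
    rw [show ((2 : ℤ) ^ k) = ((2 ^ k : ℕ) : ℤ) by push_cast; rfl, Int.toNat_natCast]
  rw [h3, ← mul_pow]
  norm_num

lemma mem_sidePairs {k : ℕ} {p : ℤ} {z : ℤ × ℤ} : z ∈ sidePairs k p ↔
    (p - 2 ^ (k + 1) < z.1 ∧ z.1 ≤ p - 2 ^ k) ∧ (p + 2 ^ k ≤ z.2 ∧ z.2 < p + 2 ^ (k + 1)) := by
  rw [sidePairs, Finset.mem_product, Finset.mem_Ioc, Finset.mem_Ico]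

lemma Isolated.differ {m : ℕ} {γ : Finset ℤ} (heven : Even γ.card) (hirr : Irr m γ) {k : ℕ}
    (hk : 2 ^ (k + 1) ≤ dia γ) {p : ℤ} (hp : p ∈ γ) (hiso : Isolated m γ k p)
    {z : ℤ × ℤ} (hz : z ∈ sidePairs k p) : ¬ (z.1 ∈ encl γ ↔ z.2 ∈ encl γ) := by
  rw [mem_sidePairs] at hz
  have hkpos : (0 : ℤ) < 2 ^ k := by positivity
  rw [mem_encl_iff_iff heven (by linarith [hz.1.2, hz.2.1]), Nat.not_even_iff_odd]
  convert hiso.odd_card hirr hk hp using 2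
  apply Finset.filter_congr
  intro q hq
  rw [abs_lt]
  constructor
  · rintro ⟨h1, h2⟩
    rw [← abs_lt]
    by_contra hcon
    have h3 := hiso q hq (not_lt.1 hcon)
    have h4 : (2 : ℤ) ^ (k + 1) ≤ 2 ^ (gap m k + 1) :=
      pow_le_pow_right₀ (by norm_num) (by unfold gap; omega)
    have h5 := h4.trans h3
    rw [le_abs] at h5
    rcases h5 with h5 | h5 <;> linarith [hz.1.1, hz.2.2]
  · rintro ⟨h1, h2⟩
    constructor <;> linarith [hz.1.2, hz.2.1]

lemma card_le_cut {α : ℝ} (hα : 1 < α) {γ : Finset ℤ} (heven : Even γ.card) :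
    (γ.card : ℝ) ≤ 2 * cut α (encl γ) := by
  have h := sum_kern_le_cut hα (encl γ) (γ.image fun p => (p - 1, p)) (by
    intro z hz
    obtain ⟨p, hp, rfl⟩ := Finset.mem_image.1 hz
    rw [mem_encl_iff_iff heven (by simp)]
    have : (γ.filter fun q => p - 1 < q ∧ q ≤ p) = {p} := by
      ext q
      rw [Finset.mem_filter, Finset.mem_singleton]
      constructor
      · rintro ⟨-, h1, h2⟩; omega
      · rintro rfl; exact ⟨hp, by omega, le_rfl⟩
    rw [this, Finset.card_singleton, Nat.not_even_iff_odd]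
    exact odd_one)
  rw [Finset.sum_image (fun a _ b _ hab => (Prod.ext_iff.1 hab).2)] at h
  simpa [kern] using h

/-- The energy of an irreducible family dominates the number of isolated points at all scales. -/
lemma sum_isolated_le_cut {α : ℝ} (hα1 : 1 < α) (hα2 : α ≤ 2) {m : ℕ} {γ : Finset ℤ}
    (heven : Even γ.card) (hirr : Irr m γ) (n : ℕ) (hn : 2 ^ n ≤ dia γ) (O : ℕ → Finset ℤ)
    (hO : ∀ k, O k ⊆ γ) (hspread : ∀ k, Spread (gap m k + 3) (O k))
    (hiso : ∀ k, ∀ p ∈ O k, Isolated m γ k p) :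
    ∑ k ∈ Finset.range n, ((O k).card : ℝ) ≤ 32 * cut α (encl γ) := by
  set T : ℕ → Finset (ℤ × ℤ) := fun k => (O k).biUnion (sidePairs k) with hT
  have hdist : ∀ k, ∀ z ∈ T k, (2 : ℤ) ^ (k + 1) ≤ z.2 - z.1 ∧ z.2 - z.1 < 2 ^ (k + 2) := by
    intro k z hz
    obtain ⟨p, hp, hz⟩ := Finset.mem_biUnion.1 hz
    rw [mem_sidePairs] at hz
    have h1 : (2 : ℤ) ^ (k + 1) = 2 * 2 ^ k := by ring
    have h2 : (2 : ℤ) ^ (k + 2) = 4 * 2 ^ k := by ring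
    constructor <;> linarith [hz.1.1, hz.1.2, hz.2.1, hz.2.2]
  have hTcard : ∀ k, (T k).card = (O k).card * 4 ^ k := by
    intro k
    rw [hT, Finset.card_biUnion, Finset.sum_congr rfl fun p _ => card_sidePairs k p,
      Finset.sum_const, smul_eq_mul]
    intro p hp q hq hn
    refine Finset.disjoint_left.2 fun z hz hz' => ?_
    rw [mem_sidePairs] at hz hz'
    have h1 := hspread k p hp q hq hn
    have h2 : (2 : ℤ) ^ (k + 1) ≤ 2 ^ (gap m k + 3) :=
      pow_le_pow_right₀ (by norm_num) (by unfold gap; omega)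
    have h3 : (0 : ℤ) < 2 ^ k := by positivity
    have h4 := h2.trans h1
    rw [le_abs] at h4
    rcases h4 with h4 | h4 <;> linarith [hz.1.1, hz.1.2, hz'.1.1, hz'.1.2]
  have hdisj : ∀ k ∈ Finset.range n, ∀ l ∈ Finset.range n, k ≠ l → Disjoint (T k) (T l) := by
    intro k _ l _ hn
    rw [Finset.disjoint_left]
    intro z hz hz'
    have h1 := hdist k z hz
    have h2 := hdist l z hz'
    rcases lt_or_gt_of_ne hn with h | h
    · have : (2 : ℤ) ^ (k + 2) ≤ 2 ^ (l + 1) := pow_le_pow_right₀ (by norm_num) (by omega)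
      linarith
    · have : (2 : ℤ) ^ (l + 2) ≤ 2 ^ (k + 1) := pow_le_pow_right₀ (by norm_num) (by omega)
      linarith
  have hsum := sum_kern_le_cut hα1 (encl γ) ((Finset.range n).biUnion T) (by
    intro z hz
    obtain ⟨k, hk, hz⟩ := Finset.mem_biUnion.1 hz
    obtain ⟨p, hp, hz⟩ := Finset.mem_biUnion.1 hz
    rw [Finset.mem_range] at hk
    exact (hiso k p hp).differ heven hirr
      ((pow_le_pow_right₀ (by norm_num) (by omega)).trans hn) (hO k hp) hz)
  rw [Finset.sum_biUnion hdisj] at hsum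
  have hterm : ∀ k, ((O k).card : ℝ) / 16 ≤ ∑ z ∈ T k, kern α (z.1 - z.2) := by
    intro k
    have h1 : ∀ z ∈ T k, (1 / 4 : ℝ) ^ (k + 2) ≤ kern α (z.1 - z.2) := by
      intro z hz
      have h := hdist k z hz
      have h0 : (0 : ℤ) < 2 ^ (k + 1) := by positivity
      apply le_kern hα1 hα2
      · intro h'; linarith
      · rw [abs_sub_comm, abs_of_nonneg] <;> linarith
    have h2 := Finset.card_nsmul_le_sum _ _ _ h1
    rw [hTcard, nsmul_eq_mul] at h2
    refine le_trans (le_of_eq ?_) h2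
    push_cast
    have h4 : (4 : ℝ) ^ k * (1 / 4) ^ k = 1 := by rw [← mul_pow]; norm_num
    rw [pow_add, mul_assoc, ← mul_assoc ((4 : ℝ) ^ k), h4]
    ring
  have h5 := Finset.sum_le_sum fun k (_ : k ∈ Finset.range n) => hterm k
  rw [← Finset.sum_div] at h5
  linarith

lemma sum_range_three_mul (a : ℕ → ℝ) (C I : ℕ) :
    ∑ j ∈ Finset.range (C + 3 * I), a j = ∑ j ∈ Finset.range C, a j +
      ∑ i ∈ Finset.range I, (a (C + 3 * i) + a (C + 3 * i + 1) + a (C + 3 * i + 2)) := by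
  induction I with
  | zero => simp
  | succ I ih =>
    rw [Finset.sum_range_succ, ← add_assoc, ← ih, show C + 3 * (I + 1) = C + 3 * I + 1 + 1 + 1 by ring,
      Finset.sum_range_succ, Finset.sum_range_succ, Finset.sum_range_succ]
    ring

lemma sum_range_two_mul (a : ℕ → ℝ) (I : ℕ) :
    ∑ j ∈ Finset.range (2 * I), a j = ∑ i ∈ Finset.range I, (a (2 * i) + a (2 * i + 1)) := by
  induction I with
  | zero => simp
  | succ I ih =>
    rw [Finset.sum_range_succ, ← ih, show 2 * (I + 1) = 2 * I + 1 + 1 by ring,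
      Finset.sum_range_succ, Finset.sum_range_succ]
    ring

/-- A nonincreasing sequence that halves, up to an error, when its index grows by a factor `3/2`
has a sum bounded by its first term and the errors. -/
lemma sum_le_of_halving {a o : ℕ → ℝ} (ha : Antitone a) (ha0 : ∀ k, 0 ≤ a k) (ho : ∀ k, 0 ≤ o k)
    {C n : ℕ} (hC : 3 ≤ C) (h : ∀ k < n, 2 * a (C + (k + k / 2)) ≤ a k + o k) :
    ∑ j ∈ Finset.range (n + 2), a j ≤ 4 * (C * a 0 + ∑ k ∈ Finset.range n, o k) := by
  set I := n / 2
  have h1 : ∑ j ∈ Finset.range (n + 2), a j ≤ ∑ j ∈ Finset.range (C + 3 * I), a j :=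
    Finset.sum_le_sum_of_subset_of_nonneg (Finset.range_mono (by omega)) fun k _ _ => ha0 k
  have h2 : ∑ j ∈ Finset.range C, a j ≤ C * a 0 := by
    have := Finset.sum_le_card_nsmul (Finset.range C) a (a 0) fun k _ => ha (Nat.zero_le k)
    simpa using this
  have h3 : ∑ i ∈ Finset.range I, (a (C + 3 * i) + a (C + 3 * i + 1) + a (C + 3 * i + 2)) ≤
      ∑ i ∈ Finset.range I, (3 / 4 * (a (2 * i) + a (2 * i + 1)) + (o (2 * i) + o (2 * i + 1))) := by
    refine Finset.sum_le_sum fun i hi => ?_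
    rw [Finset.mem_range] at hi
    have e1 := h (2 * i) (by omega)
    have e2 := h (2 * i + 1) (by omega)
    rw [show C + (2 * i + 2 * i / 2) = C + 3 * i by omega] at e1
    rw [show C + (2 * i + 1 + (2 * i + 1) / 2) = C + 3 * i + 1 by omega] at e2
    have e3 := ha (show C + 3 * i + 1 ≤ C + 3 * i + 2 by omega)
    have e4 := ha (show 2 * i ≤ 2 * i + 1 by omega)
    have e5 := ho (2 * i)
    linarith
  rw [Finset.sum_add_distrib (f := fun i => 3 / 4 * (a (2 * i) + a (2 * i + 1))), ← Finset.mul_sum,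
    ← sum_range_two_mul a, ← sum_range_two_mul o] at h3
  have h4 : ∑ j ∈ Finset.range (2 * I), a j ≤ ∑ j ∈ Finset.range (C + 3 * I), a j :=
    Finset.sum_le_sum_of_subset_of_nonneg (Finset.range_mono (by omega)) fun k _ _ => ha0 k
  have h5 : ∑ j ∈ Finset.range (2 * I), o j ≤ ∑ j ∈ Finset.range n, o j :=
    Finset.sum_le_sum_of_subset_of_nonneg (Finset.range_mono (by omega)) fun k _ _ => ho k
  have h6 := sum_range_three_mul a C I
  linarith

/-- The energy of an irreducible family dominates its multiscale covering numbers. -/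
lemma sum_cells_le_cut {α : ℝ} (hα1 : 1 < α) (hα2 : α ≤ 2) {m : ℕ} {γ : Finset ℤ}
    (heven : Even γ.card) (hne : γ.Nonempty) (hirr : Irr m γ) :
    (∑ j ∈ Finset.range (scl γ + 2), cells j γ : ℝ) ≤ 16 * (m + 22) * cut α (encl γ) := by
  choose O hO1 hO2 hO3 hO4 using exists_isolated m γ
  have hdia : 2 ^ scl γ ≤ dia γ := by
    apply Nat.pow_log_le_self
    have hcard : 1 < γ.card := by
      obtain ⟨r, hr⟩ := heven
      have := hne.card_pos
      omega
    obtain ⟨p, hp, q, hq, hpq⟩ := Finset.one_lt_card.1 hcard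
    have h1 := abs_sub_le_dia hp hq
    have h2 : 0 < |p - q| := abs_pos.2 (sub_ne_zero.2 hpq)
    omega
  have h1 := sum_le_of_halving (a := fun k => (packing γ k : ℝ)) (o := fun k => ((O k).card : ℝ))
    (C := m + 6) (n := scl γ) (fun k l hkl => Nat.cast_le.2 (packing_antitone γ hkl))
    (fun k => Nat.cast_nonneg _) (fun k => Nat.cast_nonneg _) (by omega) (by
      intro k hk
      have := hO4 k
      rw [show gap m k + 3 = m + 6 + (k + k / 2) by unfold gap; omega] at this
      exact_mod_cast this)
  have h2 := sum_isolated_le_cut hα1 hα2 heven hirr (scl γ) hdia O hO1 hO2 hO3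
  have h3 : (packing γ 0 : ℝ) ≤ 2 * cut α (encl γ) :=
    le_trans (by exact_mod_cast packing_le_card γ 0) (card_le_cut hα1 heven)
  have h4 : (∑ j ∈ Finset.range (scl γ + 2), cells j γ : ℝ) ≤
      ∑ j ∈ Finset.range (scl γ + 2), 2 * (packing γ j : ℝ) :=
    Finset.sum_le_sum fun j _ => by exact_mod_cast cells_le_packing j γ
  rw [← Finset.mul_sum] at h4
  have h5 : ((m + 6 : ℕ) : ℝ) * packing γ 0 ≤ (m + 6 : ℕ) * (2 * cut α (encl γ)) :=
    mul_le_mul_of_nonneg_left h3 (Nat.cast_nonneg _)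
  push_cast at h1 h5
  linarith

/-! ### Families far from the boundary of a set contribute little -/

lemma sum_half_pow_half_le (N : ℕ) : ∑ i ∈ Finset.range N, (1 / 2 : ℝ) ^ (i / 2) ≤ 4 := by
  have h1 : ∑ i ∈ Finset.range N, (1 / 2 : ℝ) ^ (i / 2) ≤
      ∑ i ∈ Finset.range (2 * N), (1 / 2 : ℝ) ^ (i / 2) :=
    Finset.sum_le_sum_of_subset_of_nonneg (Finset.range_mono (by omega))
      fun _ _ _ => by positivity
  rw [sum_range_two_mul] at h1
  have h2 : ∀ i, (1 / 2 : ℝ) ^ (2 * i / 2) + (1 / 2) ^ ((2 * i + 1) / 2) = 2 * (1 / 2) ^ i := by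
    intro i
    rw [show 2 * i / 2 = i by omega, show (2 * i + 1) / 2 = i by omega]; ring
  simp only [h2] at h1
  rw [← Finset.mul_sum] at h1
  have h3 := sum_geometric_two_le N
  linarith

/-- Next to a family `δ` of flips there is a long interval closer to `w`. -/
lemma exists_buffer {α : ℝ} (hα : 1 < α) (m : ℕ) {δ : Finset ℤ} (hne : δ.Nonempty) {w : ℤ}
    (hw : ∀ p ∈ δ, (2 : ℤ) ^ gap m (scl δ) ≤ |w - p|) :
    ∃ U : Finset ℤ, (∀ u ∈ U, ∃ p ∈ δ, 2 * |u - p| < 2 ^ gap m (scl δ)) ∧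
      ∑ v ∈ encl δ, kern α (w - v) ≤
        (1 / 2) ^ m * (1 / 2) ^ (scl δ / 2) * ∑ u ∈ U, kern α (w - u) := by
  set s := scl δ
  set a := δ.min' hne
  set b := δ.max' hne
  have ha : a ∈ δ := δ.min'_mem hne
  have hb : b ∈ δ := δ.max'_mem hne
  have hin : encl δ ⊆ Finset.Ico a b := by
    intro v hv
    obtain ⟨p, hp, q, hq, h1, h2⟩ := exists_bounds_of_mem_encl hv
    rw [Finset.mem_Ico]
    exact ⟨(δ.min'_le p hp).trans h1, h2.trans_le (δ.le_max' q hq)⟩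
  have hab : a ≤ b := δ.min'_le b hb
  have hlt : b - a < 2 ^ (s + 1) := (le_abs_self _).trans_lt (abs_sub_lt_two_pow_scl hb ha)
  have hcard : ((encl δ).card : ℝ) ≤ 2 ^ (s + 1) := by
    have h1 := Finset.card_le_card hin
    rw [Int.card_Ico] at h1
    have h2 : ((encl δ).card : ℤ) ≤ 2 ^ (s + 1) := by omega
    exact_mod_cast h2
  set l := m + 1 + s + s / 2 with hl
  have hg : gap m s = l + 2 := by simp only [gap, hl]; omega
  have hg4 : (2 : ℤ) ^ gap m s = 4 * 2 ^ l := by rw [hg]; ring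
  have hlpos : (0 : ℤ) < 2 ^ l := by positivity
  have hsl : (2 : ℤ) ^ (s + 1) ≤ 2 ^ l := pow_le_pow_right₀ (by norm_num) (by omega)
  have hex : ∃ U : Finset ℤ, (∀ u ∈ U, ∃ p ∈ δ, |u - p| ≤ 2 ^ l) ∧ U.card = 2 ^ l ∧
      ∀ v ∈ encl δ, ∀ u ∈ U, kern α (w - v) ≤ kern α (w - u) := by
    have hwa := hw a ha
    have hwb := hw b hb
    rw [hg4, le_abs] at hwa hwb
    have htn : ((2 : ℤ) ^ l).toNat = 2 ^ l := by
      rw [show ((2 : ℤ) ^ l) = ((2 ^ l : ℕ) : ℤ) by push_cast; rfl, Int.toNat_natCast]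
    rcases hwb with hwb | hwb
    · refine ⟨Finset.Ico b (b + 2 ^ l), fun u hu => ⟨b, hb, ?_⟩, ?_, fun v hv u hu => ?_⟩
      · rw [Finset.mem_Ico] at hu
        rw [abs_le]; constructor <;> linarith
      · rw [Int.card_Ico, add_sub_cancel_left, htn]
      · have := Finset.mem_Ico.1 (hin hv)
        rw [Finset.mem_Ico] at hu
        apply kern_anti hα
        · intro h; linarith
        · rw [abs_of_nonneg, abs_of_nonneg] <;> linarith
    · rcases hwa with hwa | hwa
      · linarith
      · refine ⟨Finset.Ico (a - 2 ^ l) a, fun u hu => ⟨a, ha, ?_⟩, ?_, fun v hv u hu => ?_⟩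
        · rw [Finset.mem_Ico] at hu
          rw [abs_le]; constructor <;> linarith
        · rw [Int.card_Ico, sub_sub_cancel, htn]
        · have := Finset.mem_Ico.1 (hin hv)
          rw [Finset.mem_Ico] at hu
          apply kern_anti hα
          · intro h; linarith
          · rw [abs_of_nonpos, abs_of_nonpos] <;> linarith
  obtain ⟨U, hU1, hU2, hU3⟩ := hex
  refine ⟨U, fun u hu => ?_, ?_⟩
  · obtain ⟨p, hp, h⟩ := hU1 u hu
    exact ⟨p, hp, by rw [hg4]; linarith⟩
  have h1 : ((2 : ℝ) ^ l) * ∑ v ∈ encl δ, kern α (w - v) ≤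
      (encl δ).card * ∑ u ∈ U, kern α (w - u) := by
    have := Finset.sum_le_sum fun v hv => Finset.sum_le_sum fun u hu => hU3 v hv u hu
    simp only [Finset.sum_const, hU2, nsmul_eq_mul] at this
    rw [← Finset.mul_sum] at this
    exact_mod_cast this
  have hS : 0 ≤ ∑ u ∈ U, kern α (w - u) := Finset.sum_nonneg fun _ _ => kern_nonneg _ _
  have h2 := h1.trans (mul_le_mul_of_nonneg_right hcard hS)
  have h3 : (2 : ℝ) ^ l = 2 ^ (s + 1) * (2 ^ m * 2 ^ (s / 2)) := by
    rw [← pow_add, ← pow_add]; congr 1; omega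
  rw [h3, mul_assoc] at h2
  have h4 := le_of_mul_le_mul_left h2 (by positivity)
  rw [one_div, inv_pow, inv_pow, ← mul_inv, inv_mul_eq_div, le_div_iff₀ (by positivity)]
  linarith

/-- Families of flips far from each other and from `w` contribute little interaction with `w`,
compared to the set `W` in which they sit. -/
lemma sum_encl_kern_le {α : ℝ} (hα : 1 < α) (m : ℕ) (𝒬 : Finset (Finset ℤ))
    (hne : ∀ δ ∈ 𝒬, δ.Nonempty) (hsep : ∀ δ ∈ 𝒬, ∀ δ' ∈ 𝒬, δ ≠ δ' → FarApart m δ δ')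
    (W : ℤ → Prop) (hW : ∀ δ ∈ 𝒬, ∀ p ∈ δ, ∀ u, |u - p| < 2 ^ gap m (scl δ) → W u)
    {w : ℤ} (hw : ¬ W w) :
    ∃ U : Finset ℤ, (∀ u ∈ U, W u) ∧ ∑ δ ∈ 𝒬, ∑ v ∈ encl δ, kern α (w - v) ≤
      4 * (1 / 2) ^ m * ∑ u ∈ U, kern α (w - u) := by
  classical
  have hex : ∀ δ ∈ 𝒬, ∃ U : Finset ℤ, (∀ u ∈ U, ∃ p ∈ δ, 2 * |u - p| < 2 ^ gap m (scl δ)) ∧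
      ∑ v ∈ encl δ, kern α (w - v) ≤
        (1 / 2) ^ m * (1 / 2) ^ (scl δ / 2) * ∑ u ∈ U, kern α (w - u) := by
    intro δ hδ
    refine exists_buffer hα m (hne δ hδ) fun p hp => ?_
    by_contra h
    exact hw (hW δ hδ p hp w (not_le.1 h))
  choose! U hU1 hU2 using hex
  refine ⟨𝒬.biUnion U, fun u hu => ?_, ?_⟩
  · obtain ⟨δ, hδ, hu⟩ := Finset.mem_biUnion.1 hu
    obtain ⟨p, hp, h⟩ := hU1 δ hδ u hu
    exact hW δ hδ p hp u (by linarith [abs_nonneg (u - p)])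
  calc ∑ δ ∈ 𝒬, ∑ v ∈ encl δ, kern α (w - v)
      ≤ ∑ δ ∈ 𝒬, (1 / 2) ^ m * (1 / 2) ^ (scl δ / 2) * ∑ u ∈ U δ, kern α (w - u) :=
        Finset.sum_le_sum hU2
    _ = ∑ δ ∈ 𝒬, ∑ u ∈ 𝒬.biUnion U, if u ∈ U δ then
          (1 / 2) ^ m * (1 / 2) ^ (scl δ / 2) * kern α (w - u) else 0 := by
        refine Finset.sum_congr rfl fun δ hδ => ?_
        rw [Finset.mul_sum, ← Finset.sum_filter, Finset.filter_mem_eq_inter,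
          Finset.inter_eq_right.2 (Finset.subset_biUnion_of_mem U hδ)]
    _ = ∑ u ∈ 𝒬.biUnion U, ((1 / 2) ^ m * ∑ δ ∈ 𝒬.filter fun δ => u ∈ U δ,
          (1 / 2) ^ (scl δ / 2)) * kern α (w - u) := by
        rw [Finset.sum_comm]
        refine Finset.sum_congr rfl fun u _ => ?_
        rw [← Finset.sum_filter, Finset.mul_sum, Finset.sum_mul]
    _ ≤ ∑ u ∈ 𝒬.biUnion U, (4 * (1 / 2) ^ m) * kern α (w - u) := by
        refine Finset.sum_le_sum fun u _ => mul_le_mul_of_nonneg_right ?_ (kern_nonneg _ _)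
        rw [mul_comm 4]
        refine mul_le_mul_of_nonneg_left ?_ (by positivity)
        have hinj : Set.InjOn scl (𝒬.filter fun δ => u ∈ U δ : Finset (Finset ℤ)) := by
          intro δ hδ δ' hδ' heq
          by_contra hn
          obtain ⟨h1, h2⟩ := Finset.mem_filter.1 hδ
          obtain ⟨h3, h4⟩ := Finset.mem_filter.1 hδ'
          obtain ⟨p, hp, h5⟩ := hU1 δ h1 u h2
          obtain ⟨q, hq, h6⟩ := hU1 δ' h3 u h4
          have h7 := hsep δ h1 δ' h3 hn p hp q hq
          rw [← heq, min_self] at h7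
          rw [← heq] at h6
          have h8 := abs_sub_le p u q
          rw [abs_sub_comm p u] at h8
          linarith
        rw [← Finset.sum_image (f := fun i => (1 / 2 : ℝ) ^ (i / 2)) hinj]
        obtain ⟨N, hN⟩ := Finset.exists_nat_subset_range
          ((𝒬.filter fun δ => u ∈ U δ).image scl)
        exact (Finset.sum_le_sum_of_subset_of_nonneg hN fun _ _ _ => by positivity).trans
          (sum_half_pow_half_le N)
    _ = 4 * (1 / 2) ^ m * ∑ u ∈ 𝒬.biUnion U, kern α (w - u) := by rw [Finset.mul_sum]

/-! ### Tails of the interaction -/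

lemma kern_mul (α : ℝ) (n : ℕ) (z : ℤ) : kern α (n * z) = (n : ℝ) ^ (-α) * kern α z := by
  unfold kern
  push_cast
  rw [abs_mul, Real.mul_rpow (abs_nonneg _) (abs_nonneg _), Nat.abs_cast]

lemma summable_pick_kern_self {α : ℝ} (hα : 1 < α) (P : ℤ → Prop) :
    Summable fun z => pick (P z) (kern α z) :=
  Summable.of_nonneg_of_le (fun _ => pick_nonneg _ (kern_nonneg _ _))
    (fun _ => pick_le _ (kern_nonneg _ _)) (summable_kern hα)

lemma tsum_tail_right_le {α : ℝ} (hα : 1 < α) {n r : ℕ} (hn : 0 < n) (hr : 0 < r) :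
    ∑' z : ℤ, pick ((n * r : ℤ) ≤ z) (kern α z) ≤
      n * (n : ℝ) ^ (-α) * ∑' z : ℤ, pick ((r : ℤ) ≤ z) (kern α z) := by
  have : NeZero n := ⟨hn.ne'⟩
  have hs := (summable_pick_kern_self hα fun z => (r : ℤ) ≤ z).hasSum
  have hprod : HasSum (fun p : ℤ × Fin n => (n : ℝ) ^ (-α) * pick ((r : ℤ) ≤ p.1) (kern α p.1))
      (n * (n : ℝ) ^ (-α) * ∑' z : ℤ, pick ((r : ℤ) ≤ z) (kern α z)) := by
    have h1 : HasSum (fun _ : Fin n => (n : ℝ) ^ (-α)) (n * (n : ℝ) ^ (-α)) := by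
      have := hasSum_fintype fun _ : Fin n => (n : ℝ) ^ (-α)
      simpa using this
    have h2 := h1.mul hs (h1.summable.mul_of_nonneg hs.summable (fun _ => by positivity)
      (fun _ => pick_nonneg _ (kern_nonneg _ _)))
    exact ((Equiv.prodComm ℤ (Fin n)).hasSum_iff (f := fun p : Fin n × ℤ =>
      (n : ℝ) ^ (-α) * pick ((r : ℤ) ≤ p.2) (kern α p.2))).2 h2
  have hl := (Int.divModEquiv n).symm.hasSum_iff.2
    (summable_pick_kern_self hα fun z => (n * r : ℤ) ≤ z).hasSum
  refine hasSum_le (fun p => ?_) hl hprod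
  obtain ⟨w, i⟩ := p
  simp only [Function.comp_apply, Int.divModEquiv_symm_apply]
  have hi : ((i : ℕ) : ℤ) < n := by exact_mod_cast i.isLt
  have hn' : (0 : ℤ) < n := by exact_mod_cast hn
  by_cases hle : (n * r : ℤ) ≤ w * n + (i : ℕ)
  · have hw : (r : ℤ) ≤ w := by
      by_contra hw
      nlinarith [not_le.1 hw]
    have hr' : (0 : ℤ) < r := by exact_mod_cast hr
    rw [pick_pos hle, pick_pos hw, ← kern_mul]
    apply kern_anti hα
    · exact (mul_pos hn' (hr'.trans_le hw)).ne'
    · have h1 : 0 ≤ n * w := (mul_pos hn' (hr'.trans_le hw)).le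
      rw [abs_of_nonneg h1, abs_of_nonneg (by linarith)]
      linarith
  · rw [pick_neg hle]
    exact mul_nonneg (by positivity) (pick_nonneg _ (kern_nonneg _ _))

lemma tsum_tail_eq {α : ℝ} (hα : 1 < α) {r : ℕ} (hr : 0 < r) (x : ℤ) :
    ∑' y : ℤ, pick ((r : ℤ) ≤ |x - y|) (kern α (x - y)) =
      2 * ∑' z : ℤ, pick ((r : ℤ) ≤ z) (kern α z) := by
  have hs := (summable_pick_kern_self hα fun z => (r : ℤ) ≤ z).hasSum
  have h1 := hs.add ((Equiv.neg ℤ).hasSum_iff.2 hs)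
  have h2 := (Equiv.subLeft x).hasSum_iff.2 h1
  rw [two_mul, ← h2.tsum_eq]
  refine tsum_congr fun y => ?_
  simp only [Function.comp_apply, Equiv.subLeft_apply, Equiv.neg_apply, kern_neg]
  have hr' : (0 : ℤ) < r := by exact_mod_cast hr
  rcases le_total 0 (x - y) with h | h
  · rw [abs_of_nonneg h, pick_neg (P := (r : ℤ) ≤ -(x - y)) (by linarith), add_zero]
  · rw [abs_of_nonpos h, pick_neg (P := (r : ℤ) ≤ x - y) (by linarith), zero_add]

lemma tsum_tail_le {α : ℝ} (hα : 1 < α) {n r : ℕ} (hn : 0 < n) (hr : 0 < r) (x : ℤ) :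
    ∑' y : ℤ, pick ((n * r : ℤ) ≤ |x - y|) (kern α (x - y)) ≤
      n * (n : ℝ) ^ (-α) * ∑' y : ℤ, pick ((r : ℤ) ≤ |x - y|) (kern α (x - y)) := by
  have h1 := tsum_tail_eq hα (Nat.mul_pos hn hr) x
  push_cast at h1
  rw [h1, tsum_tail_eq hα hr x]
  linarith [tsum_tail_right_le hα hn hr]

/-! ### Interaction between the parts of a decomposition -/

lemma exists_mem_of_differ {γ : Finset ℤ} (hγ : Even γ.card) {x y : ℤ} (hxy : x ≤ y)
    (h : ¬ (x ∈ encl γ ↔ y ∈ encl γ)) : ∃ q ∈ γ, x < q ∧ q ≤ y := by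
  rw [mem_encl_iff_iff hγ hxy, Nat.not_even_iff_odd] at h
  obtain ⟨q, hq⟩ := Finset.card_pos.1 h.pos
  exact ⟨q, (Finset.mem_filter.1 hq).1, (Finset.mem_filter.1 hq).2⟩

lemma abs_sub_lt_of_mem_encl {γ : Finset ℤ} {x y : ℤ} (hx : x ∈ encl γ) (hy : y ∈ encl γ) :
    |x - y| < 2 ^ (scl γ + 1) := by
  obtain ⟨p, hp, q, hq, h1, h2⟩ := exists_bounds_of_mem_encl hx
  obtain ⟨p', hp', q', hq', h3, h4⟩ := exists_bounds_of_mem_encl hy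
  have h5 := abs_lt.1 (abs_sub_lt_two_pow_scl hq hp')
  have h6 := abs_lt.1 (abs_sub_lt_two_pow_scl hq' hp)
  rw [abs_lt]; constructor <;> linarith [h5.2, h6.2]

lemma two_pow_scl_lt_gap (m s : ℕ) : (2 : ℤ) ^ (s + 1) ≤ 2 ^ gap m s :=
  pow_le_pow_right₀ (by norm_num) (by simp only [gap]; omega)

lemma exists_near_of_mem_encl (m : ℕ) {δ : Finset ℤ} {v : ℤ} (hv : v ∈ encl δ) :
    ∃ p ∈ δ, |v - p| < 2 ^ gap m (scl δ) := by
  obtain ⟨p, hp, q, hq, h1, h2⟩ := exists_bounds_of_mem_encl hv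
  refine ⟨p, hp, lt_of_lt_of_le ?_ (two_pow_scl_lt_gap m (scl δ))⟩
  have h3 := (abs_lt.1 (abs_sub_lt_two_pow_scl hq hp)).2
  rw [abs_of_nonneg (by linarith)]
  linarith

section Decomposition

variable {m : ℕ} {A : Finset ℤ} {𝒞 : Finset (Finset ℤ)}

lemma exists_mem_encl_part (hA : 𝒞.biUnion id = bdry A)
    (heven : ∀ δ ∈ 𝒞, Even δ.card) (hsep : ∀ δ ∈ 𝒞, ∀ δ' ∈ 𝒞, δ ≠ δ' → FarApart m δ δ')
    {x : ℤ} (hx : x ∈ A) : ∃ γ ∈ 𝒞, x ∈ encl γ := by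
  by_contra! hn
  have h1 := (odd_countLE_bdry A x).2 hx
  rw [← hA, countLE, card_filter_biUnion hsep] at h1
  refine Nat.not_even_iff_odd.2 h1 (Finset.even_sum _ fun δ hδ => ?_)
  exact Nat.not_odd_iff_even.1 fun h => hn δ hδ ((mem_encl (heven δ hδ) x).2 h)

lemma exists_part_differ_of_le (hA : 𝒞.biUnion id = bdry A)
    (heven : ∀ δ ∈ 𝒞, Even δ.card) (hsep : ∀ δ ∈ 𝒞, ∀ δ' ∈ 𝒞, δ ≠ δ' → FarApart m δ δ')
    {γ : Finset ℤ} (hγ : γ ∈ 𝒞) {x y : ℤ} (hxy : x ≤ y)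
    (h : ¬ (x ∈ encl γ ↔ y ∈ encl γ)) (hagree : x ∈ A ↔ y ∈ A) :
    ∃ δ ∈ 𝒞, δ ≠ γ ∧ ¬ (x ∈ encl δ ↔ y ∈ encl δ) := by
  by_contra! hn
  rw [← encl_bdry A, mem_encl_iff_iff (even_card_bdry A) hxy, ← hA,
    card_filter_biUnion hsep, ← Finset.add_sum_erase _ _ hγ] at hagree
  rw [mem_encl_iff_iff (heven γ hγ) hxy] at h
  refine h ((Nat.even_add.1 hagree).2 (Finset.even_sum _ fun δ hδ => ?_))
  rw [Finset.mem_erase] at hδ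
  exact (mem_encl_iff_iff (heven δ hδ.2) hxy).1 (hn δ hδ.2 hδ.1)

lemma exists_part_differ (hA : 𝒞.biUnion id = bdry A)
    (heven : ∀ δ ∈ 𝒞, Even δ.card) (hsep : ∀ δ ∈ 𝒞, ∀ δ' ∈ 𝒞, δ ≠ δ' → FarApart m δ δ')
    {γ : Finset ℤ} (hγ : γ ∈ 𝒞) {x y : ℤ}
    (h : ¬ (x ∈ encl γ ↔ y ∈ encl γ)) (hagree : x ∈ A ↔ y ∈ A) :
    ∃ δ ∈ 𝒞, δ ≠ γ ∧ ¬ (x ∈ encl δ ↔ y ∈ encl δ) := by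
  rcases le_total x y with hxy | hxy
  · exact exists_part_differ_of_le hA heven hsep hγ hxy h hagree
  · obtain ⟨δ, h1, h2, h3⟩ := exists_part_differ_of_le hA heven hsep hγ hxy
      (fun h' => h h'.symm) hagree.symm
    exact ⟨δ, h1, h2, fun h' => h3 h'.symm⟩

end Decomposition

/-- A large part separating `x ∈ encl γ` from `y` forces `x` and `y` to be far apart. -/
lemma FarApart.le_of_differ {m : ℕ} {γ δ : Finset ℤ} (hfar : FarApart m γ δ)
    (hδ : Even δ.card) (hscl : scl γ ≤ scl δ) {x y : ℤ} (hx : x ∈ encl γ)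
    (h : ¬ (x ∈ encl δ ↔ y ∈ encl δ)) : (2 : ℤ) ^ gap m (scl γ) ≤ |x - y| := by
  obtain ⟨p, hp, q, hq, h1, h2⟩ := exists_bounds_of_mem_encl hx
  have hpq := (abs_lt.1 (abs_sub_lt_two_pow_scl hq hp)).2
  have hg := two_pow_scl_lt_gap m (scl γ)
  rcases le_total x y with hxy | hxy
  · obtain ⟨r, hr, h3, h4⟩ := exists_mem_of_differ hδ hxy h
    have hpr := hfar p hp r hr
    have hqr := hfar q hq r hr
    rw [min_eq_left hscl] at hpr hqr
    rw [abs_of_nonpos (by linarith)]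
    rcases le_abs.1 hqr with h5 | h5
    · rcases le_abs.1 hpr with h6 | h6 <;> linarith
    · linarith
  · obtain ⟨r, hr, h3, h4⟩ := exists_mem_of_differ hδ hxy fun h' => h h'.symm
    have hpr := hfar p hp r hr
    have hqr := hfar q hq r hr
    rw [min_eq_left hscl] at hpr hqr
    rw [abs_of_nonneg (by linarith)]
    rcases le_abs.1 hpr with h5 | h5
    · linarith
    · rcases le_abs.1 hqr with h6 | h6 <;> linarith

/-- The neighbourhood of a small part lies on one side of the boundary of `encl γ`. -/
lemma FarApart.same_side {m : ℕ} {γ δ : Finset ℤ} (hfar : FarApart m γ δ)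
    (hγ : Even γ.card) (hscl : scl δ < scl γ) {u v p q : ℤ} (hp : p ∈ δ) (hq : q ∈ δ)
    (hu : |u - p| < 2 ^ gap m (scl δ)) (hv : |v - q| < 2 ^ gap m (scl δ)) :
    u ∈ encl γ ↔ v ∈ encl γ := by
  wlog huv : u ≤ v generalizing u v p q
  · exact (this hq hp hv hu (le_of_not_ge huv)).symm
  by_contra h
  obtain ⟨r, hr, h1, h2⟩ := exists_mem_of_differ hγ huv h
  have hpq := (abs_lt.1 (abs_sub_lt_two_pow_scl hq hp)).2
  have hg := two_pow_scl_lt_gap m (scl δ)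
  have hrp := hfar r hr p hp
  have hrq := hfar r hr q hq
  rw [min_eq_right hscl.le] at hrp hrq
  rw [abs_lt] at hu hv
  rcases le_abs.1 hrp with h3 | h3
  · rcases le_abs.1 hrq with h4 | h4 <;> linarith
  · linarith

lemma sum_kern_le_tsum_pick {α : ℝ} (hα : 1 < α) (x : ℤ) (P : ℤ → Prop) (U : Finset ℤ)
    (hU : ∀ u ∈ U, P u) :
    ∑ u ∈ U, kern α (x - u) ≤ ∑' y, pick (P y) (kern α (x - y)) := by
  rw [Finset.sum_congr rfl fun u hu => (pick_pos (hU u hu) (kern α (x - u))).symm]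
  exact (summable_pick_kern hα x P).sum_le_tsum _ fun _ _ => pick_nonneg _ (kern_nonneg _ _)

lemma tsum_pick_mem (α : ℝ) (x : ℤ) (S : Finset ℤ) :
    ∑' y, pick (y ∈ S) (kern α (x - y)) = ∑ y ∈ S, kern α (x - y) := by
  rw [tsum_eq_sum (s := S) fun y hy => pick_neg hy _]
  exact Finset.sum_congr rfl fun y hy => pick_pos hy _

lemma sum_tsum_outside_le {α : ℝ} (hα : 1 < α) (m : ℕ) (𝒬 : Finset (Finset ℤ))
    (hne : ∀ δ ∈ 𝒬, δ.Nonempty) (hsep : ∀ δ ∈ 𝒬, ∀ δ' ∈ 𝒬, δ ≠ δ' → FarApart m δ δ')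
    (B : Finset ℤ) (hB : ∀ δ ∈ 𝒬, ∀ p ∈ δ, ∀ u, |u - p| < 2 ^ gap m (scl δ) → u ∉ B)
    {x : ℤ} (hx : x ∈ B) :
    ∑ δ ∈ 𝒬, ∑' y, pick (y ∈ encl δ) (kern α (x - y)) ≤
      4 * (1 / 2) ^ m * ∑' y, pick (y ∉ B ∧ True) (kern α (x - y)) := by
  simp only [tsum_pick_mem]
  obtain ⟨U, hU, h⟩ := sum_encl_kern_le hα m 𝒬 hne hsep (· ∉ B) hB (w := x) (not_not.2 hx)
  refine h.trans (mul_le_mul_of_nonneg_left ?_ (by positivity))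
  exact sum_kern_le_tsum_pick hα x _ U fun u hu => ⟨hU u hu, trivial⟩

lemma sum_tsum_inside_le {α : ℝ} (hα : 1 < α) (m : ℕ) (𝒬 : Finset (Finset ℤ))
    (hne : ∀ δ ∈ 𝒬, δ.Nonempty) (hsep : ∀ δ ∈ 𝒬, ∀ δ' ∈ 𝒬, δ ≠ δ' → FarApart m δ δ')
    (B : Finset ℤ) (hB : ∀ δ ∈ 𝒬, ∀ p ∈ δ, ∀ u, |u - p| < 2 ^ gap m (scl δ) → u ∈ B) :
    ∑ x ∈ B, ∑ δ ∈ 𝒬, ∑' y, pick (y ∉ B ∧ x ∈ encl δ) (kern α (x - y)) ≤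
      4 * (1 / 2) ^ m * cut α B := by
  have hs : ∀ (x : ℤ) (δ : Finset ℤ),
      Summable fun y => pick (y ∉ B ∧ x ∈ encl δ) (kern α (x - y)) :=
    fun x δ => summable_pick_kern hα x _
  have hs' : ∀ x ∈ B, Summable fun y => pick (y ∉ B ∧ True) (kern α (x - y)) :=
    fun x _ => summable_pick_kern hα x _
  have e1 : ∑ x ∈ B, ∑ δ ∈ 𝒬, ∑' y, pick (y ∉ B ∧ x ∈ encl δ) (kern α (x - y)) =
      ∑' y, ∑ x ∈ B, ∑ δ ∈ 𝒬, pick (y ∉ B ∧ x ∈ encl δ) (kern α (x - y)) := by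
    rw [Summable.tsum_finsetSum fun x _ => summable_sum fun δ _ => hs x δ]
    exact Finset.sum_congr rfl fun x _ => (Summable.tsum_finsetSum fun δ _ => hs x δ).symm
  rw [e1, cut, partialCut, ← Summable.tsum_finsetSum hs', ← tsum_mul_left]
  refine Summable.tsum_le_tsum (fun y => ?_)
    (summable_sum fun x _ => summable_sum fun δ _ => hs x δ) ((summable_sum hs').mul_left _)
  by_cases hy : y ∈ B
  · simp [pick, hy]
  obtain ⟨U, hU, h⟩ := sum_encl_kern_le hα m 𝒬 hne hsep (· ∈ B) hB hy
  rw [Finset.sum_comm]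
  refine le_trans (Finset.sum_le_sum fun δ _ => ?_)
    (h.trans (mul_le_mul_of_nonneg_left ?_ (by positivity)))
  · calc ∑ x ∈ B, pick (y ∉ B ∧ x ∈ encl δ) (kern α (x - y))
        = ∑ x ∈ B.filter (· ∈ encl δ), kern α (y - x) := by
          rw [Finset.sum_filter]
          refine Finset.sum_congr rfl fun x _ => ?_
          rw [kern_sub_comm]
          by_cases hx : x ∈ encl δ <;> simp [pick, hx, hy]
      _ ≤ ∑ x ∈ encl δ, kern α (y - x) :=
          Finset.sum_le_sum_of_subset_of_nonneg (fun x hx => (Finset.mem_filter.1 hx).2)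
            fun _ _ _ => kern_nonneg _ _
  · calc ∑ u ∈ U, kern α (y - u) ≤ ∑ u ∈ B, kern α (y - u) :=
          Finset.sum_le_sum_of_subset_of_nonneg hU fun _ _ _ => kern_nonneg _ _
      _ = ∑ x ∈ B, pick (y ∉ B ∧ True) (kern α (x - y)) := by
          refine Finset.sum_congr rfl fun x _ => ?_
          rw [pick_pos ⟨hy, trivial⟩, kern_sub_comm]

/-- The part of the cut of `encl γ` which is compensated by the other parts of the
decomposition of the boundary of `A` is a small fraction of the whole cut. -/
lemma partialCut_agree_le {α : ℝ} (hα : 1 < α) {m : ℕ} {A : Finset ℤ} {𝒞 : Finset (Finset ℤ)}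
    (hA : 𝒞.biUnion id = bdry A) (hne : ∀ δ ∈ 𝒞, δ.Nonempty) (heven : ∀ δ ∈ 𝒞, Even δ.card)
    (hsep : ∀ δ ∈ 𝒞, ∀ δ' ∈ 𝒞, δ ≠ δ' → FarApart m δ δ') {γ : Finset ℤ} (hγ : γ ∈ 𝒞) :
    partialCut α (encl γ) (fun x y => x ∈ A ↔ y ∈ A) ≤
      (8 * (1 / 2) ^ m + ((2 ^ m : ℕ) : ℝ) * ((2 ^ m : ℕ) : ℝ) ^ (-α)) * cut α (encl γ) := by
  classical
  set B := encl γ with hB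
  set 𝒬 := 𝒞.filter fun δ => scl δ < scl γ with h𝒬
  set near : Finset ℤ → ℤ → Prop := fun δ u => ∃ p ∈ δ, |u - p| < 2 ^ gap m (scl δ) with hnear
  have hside : ∀ δ ∈ 𝒬, ∀ u v, near δ u → near δ v → (u ∈ B ↔ v ∈ B) := by
    rintro δ hδ u v ⟨p, hp, hu⟩ ⟨q, hq, hv⟩
    obtain ⟨h1, h2⟩ := Finset.mem_filter.1 hδ
    have hn : γ ≠ δ := fun h => by rw [h] at h2; exact lt_irrefl _ h2
    exact (hsep γ hγ δ h1 hn).same_side (heven γ hγ) h2 hp hq hu hv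
  set 𝒬i := 𝒬.filter fun δ => ∀ u, near δ u → u ∈ B with h𝒬i
  set 𝒬o := 𝒬.filter fun δ => ∀ u, near δ u → u ∉ B with h𝒬o
  have hi : ∀ δ ∈ 𝒬i, δ ∈ 𝒞 := fun δ hδ => (Finset.mem_filter.1 (Finset.mem_filter.1 hδ).1).1
  have ho : ∀ δ ∈ 𝒬o, δ ∈ 𝒞 := fun δ hδ => (Finset.mem_filter.1 (Finset.mem_filter.1 hδ).1).1
  set r : ℕ := 2 ^ (scl γ + 1) with hr
  have hrpos : 0 < r := by positivity
  have hpt : ∀ x ∈ B, ∀ y, pick (y ∉ B ∧ (x ∈ A ↔ y ∈ A)) (kern α (x - y)) ≤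
      pick ((((2 ^ m : ℕ) : ℤ) * r) ≤ |x - y|) (kern α (x - y)) +
      ∑ δ ∈ 𝒬i, pick (y ∉ B ∧ x ∈ encl δ) (kern α (x - y)) +
      ∑ δ ∈ 𝒬o, pick (y ∈ encl δ) (kern α (x - y)) := by
    intro x hx y
    have hk := kern_nonneg α (x - y)
    have n1 := pick_nonneg ((((2 ^ m : ℕ) : ℤ) * r) ≤ |x - y|) hk
    have n2 : 0 ≤ ∑ δ ∈ 𝒬i, pick (y ∉ B ∧ x ∈ encl δ) (kern α (x - y)) :=
      Finset.sum_nonneg fun _ _ => pick_nonneg _ hk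
    have n3 : 0 ≤ ∑ δ ∈ 𝒬o, pick (y ∈ encl δ) (kern α (x - y)) :=
      Finset.sum_nonneg fun _ _ => pick_nonneg _ hk
    by_cases hP : y ∉ B ∧ (x ∈ A ↔ y ∈ A)
    swap
    · rw [pick_neg hP]; positivity
    rw [pick_pos hP]
    obtain ⟨δ, hδ, hδγ, hd⟩ := exists_part_differ hA heven hsep hγ
      (fun h => hP.1 (h.1 hx)) hP.2
    rcases le_or_gt (scl γ) (scl δ) with hs | hs
    · have h1 := (hsep γ hγ δ hδ hδγ.symm).le_of_differ (heven δ hδ) hs hx hd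
      have h2 : (((2 ^ m : ℕ) : ℤ) * r) ≤ |x - y| := by
        refine le_trans ?_ h1
        rw [hr]
        push_cast
        rw [← pow_add]
        exact pow_le_pow_right₀ (by norm_num) (by simp only [gap]; omega)
      rw [pick_pos h2]
      linarith
    · have hδQ : δ ∈ 𝒬 := Finset.mem_filter.2 ⟨hδ, hs⟩
      by_cases hxδ : x ∈ encl δ
      · have hnx : near δ x := exists_near_of_mem_encl m hxδ
        have hδi : δ ∈ 𝒬i :=
          Finset.mem_filter.2 ⟨hδQ, fun u hu => (hside δ hδQ u x hu hnx).2 hx⟩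
        have := Finset.single_le_sum
          (f := fun δ => pick (y ∉ B ∧ x ∈ encl δ) (kern α (x - y)))
          (fun _ _ => pick_nonneg _ hk) hδi
        simp only [pick_pos (show y ∉ B ∧ x ∈ encl δ from ⟨hP.1, hxδ⟩)] at this
        linarith
      · have hyδ : y ∈ encl δ := by
          by_contra hyδ
          exact hd ⟨fun h => absurd h hxδ, fun h => absurd h hyδ⟩
        have hny : near δ y := exists_near_of_mem_encl m hyδ
        have hδo : δ ∈ 𝒬o :=
          Finset.mem_filter.2 ⟨hδQ, fun u hu h => hP.1 ((hside δ hδQ u y hu hny).1 h)⟩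
        have := Finset.single_le_sum
          (f := fun δ => pick (y ∈ encl δ) (kern α (x - y)))
          (fun _ _ => pick_nonneg _ hk) hδo
        simp only [pick_pos hyδ] at this
        linarith
  have htail : ∀ x ∈ B, ∑' y : ℤ, pick ((((2 ^ m : ℕ) : ℤ) * r) ≤ |x - y|) (kern α (x - y)) ≤
      ((2 ^ m : ℕ) : ℝ) * ((2 ^ m : ℕ) : ℝ) ^ (-α) *
        ∑' y, pick (y ∉ B ∧ True) (kern α (x - y)) := by
    intro x hx
    refine (tsum_tail_le hα (by positivity) hrpos x).trans
      (mul_le_mul_of_nonneg_left ?_ (by positivity))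
    refine Summable.tsum_le_tsum (fun y => pick_mono (fun h => ⟨fun hy => ?_, trivial⟩)
      (kern_nonneg _ _)) (summable_pick_kern hα x _) (summable_pick_kern hα x _)
    have := abs_sub_lt_of_mem_encl hx hy
    rw [hr] at h
    push_cast at h
    linarith
  have hrow : ∀ x ∈ B, ∑' y, pick (y ∉ B ∧ (x ∈ A ↔ y ∈ A)) (kern α (x - y)) ≤
      (((2 ^ m : ℕ) : ℝ) * ((2 ^ m : ℕ) : ℝ) ^ (-α) + 4 * (1 / 2) ^ m) *
        ∑' y, pick (y ∉ B ∧ True) (kern α (x - y)) +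
      ∑ δ ∈ 𝒬i, ∑' y, pick (y ∉ B ∧ x ∈ encl δ) (kern α (x - y)) := by
    intro x hx
    have s1 := summable_pick_kern hα x fun y => (((2 ^ m : ℕ) : ℤ) * r) ≤ |x - y|
    have s2 : ∀ δ ∈ 𝒬i, Summable fun y => pick (y ∉ B ∧ x ∈ encl δ) (kern α (x - y)) :=
      fun δ _ => summable_pick_kern hα x _
    have s3 : ∀ δ ∈ 𝒬o, Summable fun y => pick (y ∈ encl δ) (kern α (x - y)) :=
      fun δ _ => summable_pick_kern hα x _
    have h1 := Summable.tsum_le_tsum (hpt x hx) (summable_pick_kern hα x _)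
      ((s1.add (summable_sum s2)).add (summable_sum s3))
    rw [(s1.add (summable_sum s2)).tsum_add (summable_sum s3), s1.tsum_add (summable_sum s2),
      Summable.tsum_finsetSum s2, Summable.tsum_finsetSum s3] at h1
    have h2 := sum_tsum_outside_le hα m 𝒬o (fun δ hδ => hne δ (ho δ hδ))
      (fun δ hδ δ' hδ' => hsep δ (ho δ hδ) δ' (ho δ' hδ')) B
      (fun δ hδ p hp u hu => (Finset.mem_filter.1 hδ).2 u ⟨p, hp, hu⟩) hx
    have h3 := htail x hx
    rw [add_mul]
    linarith
  have hin := sum_tsum_inside_le hα m 𝒬i (fun δ hδ => hne δ (hi δ hδ))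
    (fun δ hδ δ' hδ' => hsep δ (hi δ hδ) δ' (hi δ' hδ')) B
    (fun δ hδ p hp u hu => (Finset.mem_filter.1 hδ).2 u ⟨p, hp, hu⟩)
  have hsum := Finset.sum_le_sum hrow
  rw [Finset.sum_add_distrib, ← Finset.mul_sum] at hsum
  have hcut : cut α B = ∑ x ∈ B, ∑' y, pick (y ∉ B ∧ True) (kern α (x - y)) := rfl
  rw [← hcut] at hsum
  rw [partialCut]
  linarith

/-! ### Erasing a part lowers the energy -/

lemma exists_scale {α : ℝ} (hα : 1 < α) {δ : ℝ} (hδ : 0 < δ) :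
    ∃ m : ℕ, 8 * (1 / 2 : ℝ) ^ m + ((2 ^ m : ℕ) : ℝ) * ((2 ^ m : ℕ) : ℝ) ^ (-α) ≤ δ := by
  have h1 : Filter.Tendsto (fun m : ℕ => (1 / 2 : ℝ) ^ m) Filter.atTop (nhds 0) :=
    tendsto_pow_atTop_nhds_zero_of_lt_one (by norm_num) (by norm_num)
  have h2 : Filter.Tendsto (fun m : ℕ => ((2 ^ m : ℕ) : ℝ) ^ (-(α - 1))) Filter.atTop (nhds 0) :=
    (tendsto_rpow_neg_atTop (by linarith)).comp
      (tendsto_natCast_atTop_atTop.comp (tendsto_pow_atTop_atTop_of_one_lt (by norm_num)))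
  have h3 := (h1.const_mul 8).add h2
  rw [mul_zero, zero_add] at h3
  obtain ⟨m, hm⟩ := (h3.eventually (eventually_le_nhds hδ)).exists
  refine ⟨m, ?_⟩
  have hpos : (0 : ℝ) < ((2 ^ m : ℕ) : ℝ) := by positivity
  have h4 : ((2 ^ m : ℕ) : ℝ) * ((2 ^ m : ℕ) : ℝ) ^ (-α) = ((2 ^ m : ℕ) : ℝ) ^ (-(α - 1)) := by
    rw [show -(α - 1) = 1 + -α by ring, Real.rpow_add hpos, Real.rpow_one]
  rw [h4]
  exact hm

lemma sum_sub_sum_symmDiff_ge {g h : ℤ → ℝ} (hg : ∀ x, |g x| ≤ h x) (A B : Finset ℤ) :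
    -∑ x ∈ B, h x ≤ ∑ x ∈ A, g x - ∑ x ∈ symmDiff A B, g x := by
  have h1 := Finset.sum_inter_add_sum_sdiff A B g
  have h2 := Finset.sum_inter_add_sum_sdiff B A h
  have h3 : ∑ x ∈ symmDiff A B, g x = ∑ x ∈ A \ B, g x + ∑ x ∈ B \ A, g x := by
    rw [symmDiff_def, Finset.sup_eq_union, Finset.sum_union disjoint_sdiff_sdiff]
  have h4 : ∑ x ∈ B \ A, g x ≤ ∑ x ∈ B \ A, h x :=
    Finset.sum_le_sum fun x _ => (abs_le.1 (hg x)).2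
  have h5 : ∑ x ∈ A ∩ B, -h x ≤ ∑ x ∈ A ∩ B, g x :=
    Finset.sum_le_sum fun x _ => (abs_le.1 (hg x)).1
  rw [Finset.sum_neg_distrib] at h5
  rw [Finset.inter_comm B A] at h2
  linarith

/-- The energy of a finite droplet `A` in a field `g`. -/
def energy (α : ℝ) (g : ℤ → ℝ) (A : Finset ℤ) : ℝ := 2 * (cut α A + ∑ x ∈ A, g x)

/-- The total number of dyadic cells needed to cover `γ`, over all scales up to its own. -/
def totalCells (γ : Finset ℤ) : ℕ := ∑ j ∈ Finset.range (scl γ + 2), cells j γ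

lemma energy_drop {α : ℝ} (hα1 : 1 < α) (hα2 : α ≤ 2) {g h : ℤ → ℝ} (hg : ∀ x, |g x| ≤ h x)
    {η : ℝ} (hη1 : η < 1)
    (hdom : ∀ Λ : Finset ℤ, Λ.Nonempty → ∑ x ∈ Λ, h x ≤ η * cut α Λ)
    {m : ℕ} (hm : 8 * (1 / 2 : ℝ) ^ m + ((2 ^ m : ℕ) : ℝ) * ((2 ^ m : ℕ) : ℝ) ^ (-α) ≤ (1 - η) / 4)
    {A : Finset ℤ} {𝒞 : Finset (Finset ℤ)}
    (hA : 𝒞.biUnion id = bdry A) (hC : ∀ δ ∈ 𝒞, δ.Nonempty ∧ Even δ.card ∧ Irr m δ)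
    (hsep : ∀ δ ∈ 𝒞, ∀ δ' ∈ 𝒞, δ ≠ δ' → FarApart m δ δ') {γ : Finset ℤ} (hγ : γ ∈ 𝒞)
    (hne : (encl γ).Nonempty) :
    energy α g (symmDiff A (encl γ)) + (1 - η) / (16 * (m + 22)) * totalCells γ ≤
      energy α g A := by
  have h1 := partialCut_agree_le hα1 hA (fun δ hδ => (hC δ hδ).1) (fun δ hδ => (hC δ hδ).2.1)
    hsep hγ
  have h2 := cut_add_partialCut hα1 A (encl γ)
  have h3 := sum_sub_sum_symmDiff_ge hg A (encl γ)
  have h4 := hdom _ hne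
  have h5 := sum_cells_le_cut hα1 hα2 (hC γ hγ).2.1 (hC γ hγ).1 (hC γ hγ).2.2
  have h0 : 0 ≤ cut α (encl γ) :=
    Finset.sum_nonneg fun _ _ => tsum_nonneg fun _ => pick_nonneg _ (kern_nonneg _ _)
  have h6 := h1.trans (mul_le_mul_of_nonneg_right hm h0)
  have h7 : (1 - η) / (16 * (m + 22)) * totalCells γ ≤ (1 - η) * cut α (encl γ) := by
    rw [div_mul_eq_mul_div, div_le_iff₀ (by positivity), mul_assoc]
    refine mul_le_mul_of_nonneg_left ?_ (by linarith)
    rw [totalCells]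
    push_cast
    linarith
  unfold energy
  linarith

/-! ### Counting families of flips -/

/-- Generating function of the nonempty subsets of `[-2 ^ K, 2 ^ K)`. -/
def genFun (q : ℝ) (K : ℕ) (t : ℝ) : ℝ :=
  ∑ γ ∈ (Finset.Ico (-2 ^ K : ℤ) (2 ^ K)).powerset.filter Finset.Nonempty,
    t ^ γ.card * q ^ ∑ k ∈ Finset.range K, cells (k + 1) γ

lemma cells_succ (k : ℕ) (γ : Finset ℤ) : cells (k + 1) γ = cells k (γ.image (· / 2)) := by
  unfold cells
  rw [Finset.image_image]
  congr 1
  refine Finset.image_congr fun z _ => ?_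
  simp only [Function.comp_apply]
  rw [Int.ediv_ediv_of_nonneg (by norm_num), pow_succ']

lemma cells_zero (γ : Finset ℤ) : cells 0 γ = γ.card := by
  simp [cells]

lemma card_filter_image_half_le (𝒮 : Finset (Finset ℤ)) (S : Finset ℤ) :
    (𝒮.filter fun γ => γ.image (· / 2) = S).card ≤ 4 ^ S.card := by
  have h1 : (𝒮.filter fun γ => γ.image (· / 2) = S) ⊆
      (S.biUnion fun s => ({2 * s, 2 * s + 1} : Finset ℤ)).powerset := by
    intro γ hγ
    rw [Finset.mem_powerset]
    intro z hz
    refine Finset.mem_biUnion.2 ⟨z / 2, ?_, ?_⟩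
    · rw [← (Finset.mem_filter.1 hγ).2]
      exact Finset.mem_image_of_mem _ hz
    · rw [Finset.mem_insert, Finset.mem_singleton]
      omega
  refine (Finset.card_le_card h1).trans ?_
  rw [Finset.card_powerset, show (4 : ℕ) = 2 ^ 2 by norm_num, ← pow_mul, mul_comm]
  exact Nat.pow_le_pow_right (by norm_num)
    (Finset.card_biUnion_le_card_mul _ _ _ fun _ _ => Finset.card_le_two)

lemma genFun_succ_le {q : ℝ} (hq : 0 ≤ q) (K : ℕ) {t : ℝ} (ht0 : 0 ≤ t) (ht1 : t ≤ 1) :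
    genFun q (K + 1) t ≤ genFun q K (4 * q * t) := by
  have hmaps : ∀ γ ∈ (Finset.Ico (-2 ^ (K + 1) : ℤ) (2 ^ (K + 1))).powerset.filter
      Finset.Nonempty, γ.image (· / 2) ∈
        (Finset.Ico (-2 ^ K : ℤ) (2 ^ K)).powerset.filter Finset.Nonempty := by
    intro γ hγ
    obtain ⟨h1, h2⟩ := Finset.mem_filter.1 hγ
    refine Finset.mem_filter.2 ⟨Finset.mem_powerset.2 fun z hz => ?_, h2.image _⟩
    obtain ⟨y, hy, rfl⟩ := Finset.mem_image.1 hz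
    have h3 := Finset.mem_Ico.1 (Finset.mem_powerset.1 h1 hy)
    rw [pow_succ'] at h3
    rw [Finset.mem_Ico]
    omega
  unfold genFun
  rw [← Finset.sum_fiberwise_of_maps_to hmaps]
  refine Finset.sum_le_sum fun S _ => ?_
  have hterm : ∀ γ ∈ ((Finset.Ico (-2 ^ (K + 1) : ℤ) (2 ^ (K + 1))).powerset.filter
      Finset.Nonempty).filter (fun γ => γ.image (· / 2) = S),
      t ^ γ.card * q ^ ∑ k ∈ Finset.range (K + 1), cells (k + 1) γ ≤
        t ^ S.card * (q ^ S.card * q ^ ∑ k ∈ Finset.range K, cells (k + 1) S) := by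
    intro γ hγ
    have hS := (Finset.mem_filter.1 hγ).2
    have hc : S.card ≤ γ.card := by rw [← hS]; exact Finset.card_image_le
    rw [Finset.sum_range_succ', cells_succ 0, cells_zero, hS, add_comm, pow_add]
    simp only [cells_succ _ γ, hS]
    exact mul_le_mul_of_nonneg_right (pow_le_pow_of_le_one ht0 ht1 hc) (by positivity)
  refine (Finset.sum_le_card_nsmul _ _ _ hterm).trans ?_
  rw [nsmul_eq_mul]
  have hcard : ((((Finset.Ico (-2 ^ (K + 1) : ℤ) (2 ^ (K + 1))).powerset.filter
      Finset.Nonempty).filter (fun γ => γ.image (· / 2) = S)).card : ℝ) ≤ 4 ^ S.card := by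
    exact_mod_cast card_filter_image_half_le _ S
  refine (mul_le_mul_of_nonneg_right hcard (by positivity)).trans (le_of_eq ?_)
  rw [mul_pow, mul_pow]
  ring

lemma genFun_le {q : ℝ} (hq0 : 0 ≤ q) (hq1 : 4 * q ≤ 1) (K : ℕ) :
    ∀ {t : ℝ}, 0 ≤ t → t ≤ 1 → genFun q K t ≤ 4 * t * (4 * q) ^ K := by
  induction K with
  | zero =>
    intro t ht0 ht1
    have hterm : ∀ γ ∈ (Finset.Ico (-2 ^ 0 : ℤ) (2 ^ 0)).powerset.filter Finset.Nonempty,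
        t ^ γ.card * q ^ ∑ k ∈ Finset.range 0, cells (k + 1) γ ≤ t := by
      intro γ hγ
      rw [Finset.sum_range_zero, pow_zero, mul_one]
      exact pow_le_of_le_one ht0 ht1 (Finset.mem_filter.1 hγ).2.card_pos.ne'
    refine (Finset.sum_le_card_nsmul _ _ _ hterm).trans ?_
    rw [nsmul_eq_mul, pow_zero (4 * q), mul_one]
    refine mul_le_mul_of_nonneg_right ?_ ht0
    have := Finset.card_filter_le (Finset.Ico (-2 ^ 0 : ℤ) (2 ^ 0)).powerset Finset.Nonempty
    rw [Finset.card_powerset, Int.card_Ico] at this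
    exact_mod_cast this
  | succ K ih =>
    intro t ht0 ht1
    refine (genFun_succ_le hq0 K ht0 ht1).trans
      ((ih (by positivity) (mul_le_one₀ hq1 ht0 ht1)).trans (le_of_eq ?_))
    ring

lemma subset_Ico_of_zero_mem_encl {γ : Finset ℤ} (h : (0 : ℤ) ∈ encl γ) :
    γ ⊆ Finset.Ico (-2 ^ (scl γ + 1) : ℤ) (2 ^ (scl γ + 1)) := by
  intro r hr
  obtain ⟨p, hp, q, hq, h1, h2⟩ := exists_bounds_of_mem_encl h
  have h3 := (abs_lt.1 (abs_sub_lt_two_pow_scl hr hp)).2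
  have h4 := (abs_lt.1 (abs_sub_lt_two_pow_scl hq hr)).2
  rw [Finset.mem_Ico]
  constructor <;> linarith

/-- The entropy bound for families of flips surrounding the origin. -/
lemma sum_pow_totalCells_le {q : ℝ} (hq0 : 0 ≤ q) (hq1 : 8 * q ≤ 1) (Γ : Finset (Finset ℤ))
    (hΓ : ∀ γ ∈ Γ, (0 : ℤ) ∈ encl γ) : ∑ γ ∈ Γ, q ^ totalCells γ ≤ 8 * q := by
  obtain ⟨N, hN⟩ := Finset.exists_nat_subset_range (Γ.image scl)
  have hmaps : ∀ γ ∈ Γ, scl γ ∈ Finset.range N := fun γ hγ => hN (Finset.mem_image_of_mem _ hγ)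
  rw [← Finset.sum_fiberwise_of_maps_to hmaps]
  have hK : ∀ K ∈ Finset.range N,
      ∑ γ ∈ Γ.filter (fun γ => scl γ = K), q ^ totalCells γ ≤ 4 * q * (1 / 2) ^ K := by
    intro K _
    have h1 : ∑ γ ∈ Γ.filter (fun γ => scl γ = K), q ^ totalCells γ ≤ genFun q (K + 1) q := by
      have hsub : Γ.filter (fun γ => scl γ = K) ⊆
          (Finset.Ico (-2 ^ (K + 1) : ℤ) (2 ^ (K + 1))).powerset.filter Finset.Nonempty := by
        intro γ hγ
        obtain ⟨h1, h2⟩ := Finset.mem_filter.1 hγ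
        have h3 := subset_Ico_of_zero_mem_encl (hΓ γ h1)
        obtain ⟨p, hp, -⟩ := exists_bounds_of_mem_encl (hΓ γ h1)
        rw [h2] at h3
        exact Finset.mem_filter.2 ⟨Finset.mem_powerset.2 h3, p, hp⟩
      unfold genFun
      refine le_trans (le_of_eq ?_) (Finset.sum_le_sum_of_subset_of_nonneg hsub
        fun _ _ _ => by positivity)
      refine Finset.sum_congr rfl fun γ hγ => ?_
      rw [totalCells, (Finset.mem_filter.1 hγ).2, Finset.sum_range_succ', cells_zero, add_comm,
        pow_add]
    refine h1.trans ((genFun_le hq0 (by linarith) (K + 1) hq0 (by linarith)).trans ?_)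
    refine mul_le_mul_of_nonneg_left ?_ (by positivity)
    calc (4 * q) ^ (K + 1) ≤ (1 / 2) ^ (K + 1) :=
          pow_le_pow_left₀ (by positivity) (by linarith) _
      _ ≤ (1 / 2) ^ K := pow_le_pow_of_le_one (by norm_num) (by norm_num) (Nat.le_succ K)
  refine (Finset.sum_le_sum hK).trans ?_
  rw [← Finset.mul_sum]
  have := sum_geometric_two_le N
  nlinarith

/-! ### The Peierls estimate -/

lemma bdry_subset {A : Finset ℤ} {L : ℕ} (hA : A ∈ box L) :
    bdry A ⊆ Finset.Icc (-(L : ℤ)) (L + 1) := by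
  intro q hq
  rw [mem_bdry] at hq
  have hsub := Finset.mem_powerset.1 hA
  rw [Finset.mem_Icc]
  by_cases h : q ∈ A
  · have := Finset.mem_Icc.1 (hsub h)
    constructor <;> linarith
  · have h1 : q - 1 ∈ A := by tauto
    have := Finset.mem_Icc.1 (hsub h1)
    constructor <;> linarith

lemma encl_mem_box {γ : Finset ℤ} {L : ℕ} (hγ : γ ⊆ Finset.Icc (-(L : ℤ)) (L + 1)) :
    encl γ ∈ box L := by
  refine Finset.mem_powerset.2 fun x hx => ?_
  obtain ⟨p, hp, q, hq, h1, h2⟩ := exists_bounds_of_mem_encl hx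
  have h3 := Finset.mem_Icc.1 (hγ hp)
  have h4 := Finset.mem_Icc.1 (hγ hq)
  rw [Finset.mem_Icc]
  constructor <;> linarith

lemma symmDiff_mem_box {A B : Finset ℤ} {L : ℕ} (hA : A ∈ box L) (hB : B ∈ box L) :
    symmDiff A B ∈ box L := by
  have hA' := Finset.mem_powerset.1 hA
  have hB' := Finset.mem_powerset.1 hB
  refine Finset.mem_powerset.2 fun x hx => ?_
  rcases Finset.mem_symmDiff.1 hx with h | h
  · exact hA' h.1
  · exact hB' h.1

lemma sum_symmDiff_box (w : Finset ℤ → ℝ) {B : Finset ℤ} {L : ℕ} (hB : B ∈ box L) :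
    ∑ A ∈ box L, w (symmDiff A B) = ∑ A ∈ box L, w A :=
  Finset.sum_nbij' (fun A => symmDiff A B) (fun A => symmDiff A B)
    (fun _ hA => symmDiff_mem_box hA hB) (fun _ hA => symmDiff_mem_box hA hB)
    (fun A _ => symmDiff_symmDiff_cancel_right B A)
    (fun A _ => symmDiff_symmDiff_cancel_right B A) fun _ _ => rfl

lemma peierls {α : ℝ} (hα1 : 1 < α) (hα2 : α ≤ 2) {g h : ℤ → ℝ} (hg : ∀ x, |g x| ≤ h x)
    {η : ℝ} (hη1 : η < 1)
    (hdom : ∀ Λ : Finset ℤ, Λ.Nonempty → ∑ x ∈ Λ, h x ≤ η * cut α Λ)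
    {m : ℕ} (hm : 8 * (1 / 2 : ℝ) ^ m + ((2 ^ m : ℕ) : ℝ) * ((2 ^ m : ℕ) : ℝ) ^ (-α) ≤ (1 - η) / 4)
    {β : ℝ} (hβ : 0 ≤ β) {q : ℝ} (hq : q = Real.exp (-β * ((1 - η) / (16 * (m + 22)))))
    (hq1 : 8 * q ≤ 1) (L : ℕ) :
    ∑ A ∈ (box L).filter (fun A => (0 : ℤ) ∈ A), Real.exp (-β * energy α g A) ≤
      8 * q * ∑ A ∈ box L, Real.exp (-β * energy α g A) := by
  have hq0 : 0 ≤ q := by rw [hq]; positivity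
  set w : Finset ℤ → ℝ := fun A => Real.exp (-β * energy α g A) with hw
  have hw0 : ∀ A, 0 ≤ w A := fun A => (Real.exp_pos _).le
  set Γ := (Finset.Icc (-(L : ℤ)) (L + 1)).powerset.filter fun γ => (0 : ℤ) ∈ encl γ with hΓ
  have hstep : ∀ A ∈ (box L).filter (fun A => (0 : ℤ) ∈ A),
      w A ≤ ∑ γ ∈ Γ, q ^ totalCells γ * w (symmDiff A (encl γ)) := by
    intro A hA
    obtain ⟨hA1, hA2⟩ := Finset.mem_filter.1 hA
    obtain ⟨𝒞, h1, h2, h3⟩ := exists_decomposition m (bdry A) (even_card_bdry A)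
    obtain ⟨γ, hγ, h0⟩ := exists_mem_encl_part h1 (fun δ hδ => (h2 δ hδ).2.1) h3 hA2
    have hdrop := energy_drop hα1 hα2 hg hη1 hdom hm h1 h2 h3 hγ ⟨0, h0⟩
    have hγΓ : γ ∈ Γ := by
      refine Finset.mem_filter.2 ⟨Finset.mem_powerset.2 ?_, h0⟩
      refine subset_trans ?_ (bdry_subset hA1)
      rw [← h1]
      exact Finset.subset_biUnion_of_mem id hγ
    refine le_trans ?_ (Finset.single_le_sum
      (f := fun γ => q ^ totalCells γ * w (symmDiff A (encl γ)))
      (fun γ _ => mul_nonneg (pow_nonneg hq0 _) (hw0 _)) hγΓ)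
    simp only [hw]
    rw [hq, ← Real.exp_nat_mul, ← Real.exp_add, Real.exp_le_exp]
    nlinarith [mul_le_mul_of_nonneg_left hdrop hβ]
  calc ∑ A ∈ (box L).filter (fun A => (0 : ℤ) ∈ A), w A
      ≤ ∑ A ∈ (box L).filter (fun A => (0 : ℤ) ∈ A),
          ∑ γ ∈ Γ, q ^ totalCells γ * w (symmDiff A (encl γ)) := Finset.sum_le_sum hstep
    _ ≤ ∑ A ∈ box L, ∑ γ ∈ Γ, q ^ totalCells γ * w (symmDiff A (encl γ)) :=
        Finset.sum_le_sum_of_subset_of_nonneg (Finset.filter_subset _ _) fun _ _ _ =>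
          Finset.sum_nonneg fun _ _ => mul_nonneg (pow_nonneg hq0 _) (hw0 _)
    _ = ∑ γ ∈ Γ, q ^ totalCells γ * ∑ A ∈ box L, w A := by
        rw [Finset.sum_comm]
        refine Finset.sum_congr rfl fun γ hγ => ?_
        rw [← Finset.mul_sum, sum_symmDiff_box w
          (encl_mem_box (Finset.mem_powerset.1 (Finset.mem_filter.1 hγ).1))]
    _ ≤ 8 * q * ∑ A ∈ box L, w A := by
        rw [← Finset.sum_mul]
        refine mul_le_mul_of_nonneg_right ?_ (Finset.sum_nonneg fun A _ => hw0 A)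
        exact sum_pow_totalCells_le hq0 hq1 Γ fun γ hγ => (Finset.mem_filter.1 hγ).2

lemma average_droplet_ge {S : Finset (Finset ℤ)} (hS : S.Nonempty) {w : Finset ℤ → ℝ}
    (hw : ∀ A, 0 < w A) {ε : ℝ}
    (h : ∑ A ∈ S.filter (fun A => (0 : ℤ) ∈ A), w A ≤ ε / 2 * ∑ A ∈ S, w A) :
    1 - ε ≤ (∑ A ∈ S, spinP A 0 * w A) / ∑ A ∈ S, w A := by
  rw [le_div_iff₀ (Finset.sum_pos (fun A _ => hw A) hS)]
  have h1 : ∑ A ∈ S, spinP A 0 * w A =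
      ∑ A ∈ S, w A - 2 * ∑ A ∈ S.filter (fun A => (0 : ℤ) ∈ A), w A := by
    rw [Finset.sum_filter, Finset.mul_sum, ← Finset.sum_sub_distrib]
    refine Finset.sum_congr rfl fun A _ => ?_
    by_cases hA : (0 : ℤ) ∈ A
    · simp only [spinP, hA, if_true]; ring
    · simp [spinP, hA]
  rw [h1]
  linarith

lemma spinM_eq_neg_spinP (A : Finset ℤ) (x : ℤ) : spinM A x = -spinP A x := by
  by_cases hx : x ∈ A <;> simp [spinM, spinP, hx]

/-- stability of the phase transition under a nonnegative external field `h`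
dominated by a fraction `η < 1` of the boundary coupling energy of every nonempty finite
`Λ ⊂ ℤ` (the inner sum `∑_{y ∈ ℤ∖Λ} |x−y|^{-α}` is a `tsum` with indicator). -/
theorem phase_transition_with_field (α : ℝ) (hα1 : 1 < α) (hα2 : α ≤ 2)
    (h : ℤ → ℝ) (hpos : ∀ x, 0 ≤ h x) (η : ℝ) (hη0 : 0 < η) (hη1 : η < 1)
    (hdom : ∀ Λ : Finset ℤ, Λ.Nonempty →
      ∑ x ∈ Λ, h x ≤ η * ∑ x ∈ Λ, ∑' y : ℤ,
        if y ∈ Λ then 0 else |(x : ℝ) - (y : ℝ)| ^ (-α))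
    (ε : ℝ) (hε0 : 0 < ε) (hε1 : ε < 1) :
    ∃ β₀ : ℝ, 0 < β₀ ∧ ∀ β : ℝ, β₀ ≤ β → ∀ L : ℕ,
      1 - ε ≤ avgP α h β L ∧ avgM α h β L ≤ -(1 - ε) := by
  simp only [← cut_eq] at hdom
  obtain ⟨m, hm⟩ := exists_scale hα1 (δ := (1 - η) / 4) (by linarith)
  set c : ℝ := (1 - η) / (16 * (m + 22)) with hc
  have hc0 : 0 < c := div_pos (by linarith) (by positivity)
  have hlog : 0 < Real.log (16 / ε) := Real.log_pos (by rw [lt_div_iff₀ hε0]; linarith)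
  refine ⟨Real.log (16 / ε) / c, div_pos hlog hc0, fun β hβ L => ?_⟩
  have hβ0 : 0 ≤ β := (div_pos hlog hc0).le.trans hβ
  have hq : Real.exp (-β * c) ≤ ε / 16 := by
    rw [div_le_iff₀ hc0] at hβ
    rw [← Real.le_log_iff_exp_le (by positivity), ← inv_div, Real.log_inv]
    linarith
  have key : ∀ g : ℤ → ℝ, (∀ x, |g x| ≤ h x) →
      1 - ε ≤ (∑ A ∈ box L, spinP A 0 * Real.exp (-β * energy α g A)) /
        ∑ A ∈ box L, Real.exp (-β * energy α g A) := by
    intro g hg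
    refine average_droplet_ge ⟨∅, Finset.empty_mem_powerset _⟩ (fun A => Real.exp_pos _) ?_
    refine (peierls hα1 hα2 hg hη1 hdom hm hβ0 rfl (by linarith) L).trans
      (mul_le_mul_of_nonneg_right (by linarith) (Finset.sum_nonneg fun _ _ => (Real.exp_pos _).le))
  constructor
  · have h1 := key h fun x => (abs_of_nonneg (hpos x)).le
    simpa only [avgP, hamP_spinP hα1, energy] using h1
  · have h1 := key (fun x => -h x) fun x => by rw [abs_neg, abs_of_nonneg (hpos x)]
    rw [avgM, le_neg]
    simp only [spinM_eq_neg_spinP, hamM_spinM hα1, neg_mul, Finset.sum_neg_distrib, neg_div, neg_neg]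
    simpa only [energy, neg_mul, Finset.sum_neg_distrib] using h1
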